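/- For all n ≥ k ≥ 1 and all natural numbers u, v, the number of π ∈ NC(n,k) with skip(π) = u and mingarc(π) = v equals the number of parallelogram polyominoes P ∈ PP(n−k+1,k) with area(P) = u and bounce(P) = v; that is, N_{n,k}(q,t) = Σ_{π∈NC(n,k)} q^{skip(π)} t^{mingarc(π)}, giving a combinatorial interpretation of the q,t-Narayana polynomial in terms of noncrossing partitions for all k. -/

import Mathlib

namespace QtN

/-! ### Lattice paths and parallelogram polyominoes -/

/-- A step of a lattice path: east or north. -/
inductive Step : Type
  | E : Step
  | N : Step
  deriving DecidableEq, Repr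

/-- Number of east steps of a path. -/
def countE (w : List Step) : ℕ := w.count Step.E

/-- Number of north steps of a path. -/
def countN (w : List Step) : ℕ := w.count Step.N

/-- Endpoint of a path started at the origin. -/
def pathPos (w : List Step) : ℕ × ℕ := (countE w, countN w)

/-- The set of lattice points visited by a path started at the origin. -/
def pathPts (w : List Step) : Finset (ℕ × ℕ) :=
  ((List.range (w.length + 1)).map (fun i => pathPos (w.take i))).toFinset

/-- `colHeightsAux w h`: for each east step of `w` (in order), the number of north
steps preceding it, starting with `h` north steps already performed. -/
def colHeightsAux : List Step → ℕ → List ℕ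
  | [], _ => []
  | Step.E :: r, h => h :: colHeightsAux r h
  | Step.N :: r, h => colHeightsAux r (h + 1)

/-- Height at which the path `w` crosses the vertical strip `i ≤ x ≤ i + 1`. -/
def colHeight (w : List Step) (i : ℕ) : ℕ := (colHeightsAux w 0).getD i 0

/-- A parallelogram polyomino of size `m × n`: a pair of monotone lattice paths from
`(0,0)` to `(m,n)` (east/north steps), the upper path staying weakly above the lower
path, and the two paths meeting only at `(0,0)` and `(m,n)`. -/
structure Polyomino (m n : ℕ) : Type where
  lower : List Step
  upper : List Step
  lowerE : countE lower = m
  lowerN : countN lower = n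
  upperE : countE upper = m
  upperN : countN upper = n
  above : ∀ i < m, colHeight lower i ≤ colHeight upper i
  meet : pathPts upper ∩ pathPts lower = {(0, 0), (m, n)}

/-- The area statistic: number of unit squares between the two paths,
minus `(m + n - 1)`. -/
def area {m n : ℕ} (P : Polyomino m n) : ℕ :=
  (∑ i ∈ Finset.range m, (colHeight P.upper i - colHeight P.lower i)) - (m + n - 1)

/-- Where an eastward run at height `y`, starting at `x`, first hits the lower path. -/
def eastTarget (hL : ℕ → ℕ) (m x y : ℕ) : ℕ :=
  ((List.range m).filter (fun i => decide (x ≤ i ∧ y ≤ hL i))).headD m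

/-- Total bounce contribution: from state `(x, y)` just after the `j`-th east-to-north
turn (counting the turns made so far), alternately go north until hitting the upper
path and east until hitting the lower path, each step contributing the number of
east-to-north turns preceding it. -/
def bounceAux (hU hL : ℕ → ℕ) (m n : ℕ) : ℕ → ℕ → ℕ → ℕ → ℕ
  | 0, _, _, _ => 0
  | fuel + 1, x, y, j =>
    if x = m ∧ y = n then 0
    else
      let y' := hU (x - 1)
      let x' := if y' = n then m else eastTarget hL m x y'
      (j + 1) * ((y' - y) + (x' - x)) + bounceAux hU hL m n fuel x' y' (j + 1)

/-- The bounce statistic of a parallelogram polyomino: the bounce path starts with a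
single east step (contributing `0`) and then alternates north runs (to the ceiling)
and east runs (to the floor); each step contributes the number of east-to-north turns
preceding it; finally `(m + n - 1)` is subtracted. -/
def bounce {m n : ℕ} (P : Polyomino m n) : ℕ :=
  bounceAux (colHeight P.upper) (colHeight P.lower) m n (m + n + 2) 1 0 0 - (m + n - 1)

/-! ### Set partitions and noncrossing partitions -/

/-- Maximum of a finite set of naturals (`0` for the empty set). -/
def fmax (β : Finset ℕ) : ℕ := β.sup id

/-- Minimum of a finite set of naturals (`0` for the empty set). -/
def fmin (β : Finset ℕ) : ℕ := if h : β.Nonempty then β.min' h else 0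

/-- A set partition of `{1, …, n}`, given by its finite set of blocks. -/
structure SetPartition (n : ℕ) : Type where
  blocks : Finset (Finset ℕ)
  not_empty_mem : ∅ ∉ blocks
  cover : ∀ i : ℕ, i ∈ Finset.Icc 1 n ↔ ∃ β ∈ blocks, i ∈ β
  disjoint : ∀ β ∈ blocks, ∀ γ ∈ blocks, β ≠ γ → Disjoint β γ

/-- A family of blocks is noncrossing if there are no `a < b < c < d` with
`a, c` in one block and `b, d` in a different block. -/
def IsNoncrossing (bs : Finset (Finset ℕ)) : Prop :=
  ∀ a b c d : ℕ, a < b → b < c → c < d →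
    ∀ β ∈ bs, ∀ γ ∈ bs, a ∈ β → c ∈ β → b ∈ γ → d ∈ γ → β = γ

/-- `NC n k`: noncrossing partitions of `{1, …, n}` with exactly `n - k + 1` blocks. -/
abbrev NC (n k : ℕ) : Type :=
  {P : SetPartition n // IsNoncrossing P.blocks ∧ P.blocks.card = n - k + 1}

/-- The skip statistic: `∑_{β} (max β - min β - |β| + 1)`. -/
def skip (bs : Finset (Finset ℕ)) : ℕ :=
  ∑ β ∈ bs, ((fmax β + 1 - fmin β) - β.card)

/-- The non-singleton blocks of a partition. -/
def nsBlocks (bs : Finset (Finset ℕ)) : Finset (Finset ℕ) :=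
  bs.filter (fun β => 2 ≤ β.card)

/-- The block of `bs` containing `x` (junk if there is not exactly one). -/
def blockContaining (bs : Finset (Finset ℕ)) (x : ℕ) : Finset ℕ :=
  (bs.filter (fun β => x ∈ β)).sup id

/-- For a noncrossing partition in `NC n 3`, the quadruple `(a, b, c, d)` describing its
non-singleton blocks: for two pair blocks `{a,b}` and `{c,d}` (with `a` the global
minimum) this is `(a, b, c, d)`; for a single triple block `{a, b, c}` (`a < b < c`)
this is `(a, b, b, c)`. -/
def blockQuad (bs : Finset (Finset ℕ)) : ℕ × ℕ × ℕ × ℕ :=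
  let A := blockContaining (nsBlocks bs) (fmin ((nsBlocks bs).sup id))
  if (nsBlocks bs).card = 1 then
    let l := A.sort (· ≤ ·)
    (l.getD 0 0, l.getD 1 0, l.getD 1 0, l.getD 2 0)
  else
    let B := ((nsBlocks bs).erase A).sup id
    (fmin A, fmax A, fmin B, fmax B)

/-- The leap statistic on `NC n 3`: `leap(ab|cd) = c - 2 + max(0, c - b)`,
and `leap({a,b,c}) = b - 2` (the case `b = c`). -/
def leap (bs : Finset (Finset ℕ)) : ℕ :=
  let (_, b, c, _) := blockQuad bs
  (c - 2) + (c - b)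

/-- The skew statistic on `NC n 3`: `skew(ab|cd) = c - 2 + a` if `b < c`, else `c - 2`;
`skew({a,b,c}) = b - 2` (the case `b = c`). -/
def skew (bs : Finset (Finset ℕ)) : ℕ :=
  let (a, b, c, _) := blockQuad bs
  if b < c then c - 2 + a else c - 2

/-- The mag statistic on `NC n 3`: `mag(ab|cd) = a + max(b, c) - 2 - ⌈(b - a)/2⌉`,
and `mag({a,b,c}) = a + b - 2 - ⌈(b - a)/2⌉` (the case `b = c`). -/
def mag (bs : Finset (Finset ℕ)) : ℕ :=
  let (a, b, c, _) := blockQuad bs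
  a + max b c - 2 - (b - a + 1) / 2

/-- The area statistic on noncrossing partitions:
`area(π) = ∑_{β, β' ∈ π} #{ i ∈ β' : i < max β < max β' }` (ordered pairs of blocks). -/
def ncArea (bs : Finset (Finset ℕ)) : ℕ :=
  ∑ β ∈ bs, ∑ γ ∈ bs, (γ.filter (fun i => i < fmax β ∧ fmax β < fmax γ)).card

/-- The elements of the non-singleton blocks, listed in increasing order, with
the middle element of a size-3 block listed twice. -/
def nsList (bs : Finset (Finset ℕ)) : List ℕ :=
  let l := ((nsBlocks bs).sup id).sort (· ≤ ·)
  if l.length = 3 then [l.getD 0 0, l.getD 1 0, l.getD 1 0, l.getD 2 0] else l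

/-- The multiset of block sizes of a partition. -/
def blockSizes (bs : Finset (Finset ℕ)) : Multiset ℕ := bs.val.map Finset.card

/-- The image of a partition of `{1, …, n}` under the flip `i ↦ n + 1 - i`. -/
def flipBlocks (n : ℕ) (bs : Finset (Finset ℕ)) : Finset (Finset ℕ) :=
  bs.image (fun β => β.image (fun i => n + 1 - i))

/-! ### The mingarc statistic -/

/-- The gaps `ν_r = m_{r+1} - m_r - 1` between consecutive block minima
`m_1 < ⋯ < m_h` (with `m_{h+1} = n + 1`). -/
def nuList (n : ℕ) (bs : Finset (Finset ℕ)) : List ℕ :=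
  let ms := ((bs.image fmin).sort (· ≤ ·)) ++ [n + 1]
  (List.range (bs.image fmin).card).map (fun r => ms.getD (r + 1) 0 - ms.getD r 0 - 1)

/-- Concatenation of `replicate ν c` over a list of pairs `(c, ν)`. -/
def repeatEach : List (ℕ × ℕ) → List ℕ
  | [] => []
  | p :: r => List.replicate p.2 p.1 ++ repeatEach r

/-- The right endpoints `y_1 ≤ ⋯ ≤ y_{k-1}`: each block maximum `c_r` repeated
`ν_r` times, in increasing order. -/
def ysList (n : ℕ) (bs : Finset (Finset ℕ)) : List ℕ :=
  repeatEach (List.zip ((bs.image fmax).sort (· ≤ ·)) (nuList n bs))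

/-- The left endpoints `x_1 < ⋯ < x_{k-1}`: the elements of `{1, …, n}` that are not
block maxima, in increasing order. -/
def xsList (n : ℕ) (bs : Finset (Finset ℕ)) : List ℕ :=
  ((Finset.Icc 1 n).filter (fun i => i ∉ bs.image fmax)).sort (· ≤ ·)

/-- Greedy left-to-right selection of arcs: keep the first arc, and thereafter keep the
earliest arc whose left endpoint exceeds the right endpoint of the last kept arc. -/
def greedyArcs : List (ℕ × ℕ) → Option ℕ → List (ℕ × ℕ)
  | [], _ => []
  | a :: rest, none => a :: greedyArcs rest (some a.2)
  | a :: rest, some r =>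
      if r < a.1 then a :: greedyArcs rest (some a.2) else greedyArcs rest (some r)

/-- The mingarc statistic: the sum of `n - y_i` over the greedily selected
candidate arcs `[x_i, y_i]`. -/
def mingarc (n : ℕ) (bs : Finset (Finset ℕ)) : ℕ :=
  ((greedyArcs (List.zip (xsList n bs) (ysList n bs)) none).map (fun p => n - p.2)).sum

/-! ### The map η from polyominoes to noncrossing partitions -/

/-- Largest column index `i < m` with `colHeight lower i ≤ j`: the rightmost cell
adjacent to the floor in row `j`. -/
def eFloor {m k : ℕ} (P : Polyomino m k) (j : ℕ) : ℕ :=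
  (((List.range m).filter (fun i => decide (colHeight P.lower i ≤ j))).getLastD 0)

/-- Smallest column index `i` with `colHeight upper i ≥ j + 1`: the leftmost cell
adjacent to the ceiling in row `j` (with default `m - 1`). -/
def fCeil {m k : ℕ} (P : Polyomino m k) (j : ℕ) : ℕ :=
  (((List.range m).filter (fun i => decide (j + 1 ≤ colHeight P.upper i))).headD (m - 1))

/-- The number of cells adjacent to the ceiling in row `j`. -/
def rowCount {m k : ℕ} (P : Polyomino m k) (j : ℕ) : ℕ :=
  fCeil P (j + 1) - fCeil P j + 1

/-- Pick, `cnt` times, the largest label in `{1, …, L}` not used yet. -/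
def pickRow : ℕ → ℕ → Finset ℕ → Finset ℕ
  | 0, _, _ => ∅
  | cnt + 1, L, used =>
      let x := fmax ((Finset.Icc 1 L) \ used)
      insert x (pickRow cnt L (insert x used))

/-- The blocks of `η(P)`: label the cells adjacent to the floor `1, …, n` going bottom
to top, left to right (the label of the floor cell in column `i`, row `j` is
`i + j + 1`, and the labels present in rows `≤ j` are exactly `1, …, eFloor P j + j + 1`);
then going bottom to top, left to right over the cells adjacent to the ceiling, assign
to each the largest unused indexing label occurring in the same row or below; the
blocks are the label sets of the ceiling rows. -/
def etaBlocks {m k : ℕ} (P : Polyomino m k) : Finset (Finset ℕ) :=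
  (((List.range k).foldl
      (fun st j =>
        let B := pickRow (rowCount P j) (eFloor P j + j + 1) st.1
        (st.1 ∪ B, B :: st.2))
      ((∅ : Finset ℕ), ([] : List (Finset ℕ)))).2).toFinset

/-!
Both sides count pairs of words `(u, l)` in the steps `E` and `N` in which `u` stays ahead of `l`
(`Leads Step.E 1 u l`). For a polyomino `u` is the ceiling and `l` the floor without its first step.
A noncrossing partition is determined by its block minima and its block maxima: here `l` marks the
maxima, and `u` marks the minima and ends with an additional `E`. Under these encodings area and
skip become the same statistic of `(u, l)`, and so do bounce and mingarc, since each arc kept by the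
greedy scan comes from two consecutive turns of the bounce path. Only the numbers of letters differ:
`l` has `k - 1` letters `E` and `n - k + 1` letters `N` for partitions, but `n - k` and `k` for
polyominoes.

So it remains to exchange `r` and `s` in the count of the pairs where `l` has `r` letters `E` and
`s + 1` letters `N`. Cutting the words at the turns of the bounce path gives a recursion for the
generating functions whose coefficients are Gaussian binomials. By the `q`-Vandermonde identity its
solution is a combination of kernels satisfying a recursion that is visibly symmetric in `r`
and `s`.
-/

section FiniteSums

open Finset Finset.Nat

variable {R : Type*} [AddCommMonoid R]

theorem sum_antidiagonal_assoc (f : ℕ → ℕ → ℕ → R) (n : ℕ) :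
    ∑ x ∈ antidiagonal n, ∑ y ∈ antidiagonal x.1, f y.1 y.2 x.2 =
      ∑ x ∈ antidiagonal n, ∑ y ∈ antidiagonal x.2, f x.1 y.1 y.2 := by
  simp only [Finset.sum_sigma']
  apply Finset.sum_nbij' (fun ⟨⟨_, c⟩, ⟨a, b⟩⟩ ↦ ⟨(a, b + c), (b, c)⟩)
    (fun ⟨⟨a, _⟩, ⟨b, c⟩⟩ ↦ ⟨(a + b, c), (a, b)⟩) <;>
    grind [Finset.HasAntidiagonal.mem_antidiagonal]

theorem sum_antidiagonal_left_comm (f : ℕ → ℕ → ℕ → R) (n : ℕ) :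
    ∑ x ∈ antidiagonal n, ∑ y ∈ antidiagonal x.2, f x.1 y.1 y.2 =
      ∑ x ∈ antidiagonal n, ∑ y ∈ antidiagonal x.2, f y.1 x.1 y.2 := by
  rw [← sum_antidiagonal_assoc, ← sum_antidiagonal_assoc fun i j ↦ f j i]
  exact Finset.sum_congr rfl fun x _ ↦
    (sum_antidiagonal_swap (f := fun y ↦ f y.1 y.2 x.2)).symm

theorem sum_antidiagonal_add_of_eq_zero (f : ℕ → ℕ → R) (k n : ℕ)
    (hf : ∀ i j, i < k → f i j = 0) :
    ∑ x ∈ antidiagonal (k + n), f x.1 x.2 = ∑ x ∈ antidiagonal n, f (k + x.1) x.2 := by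
  induction k generalizing f with
  | zero => simp only [Nat.zero_add]
  | succ k ih =>
    rw [Nat.add_right_comm, sum_antidiagonal_succ, hf _ _ k.succ_pos, zero_add,
      ih (fun i j ↦ f (i + 1) j) fun i j h ↦ hf _ _ (Nat.succ_lt_succ h)]
    simp only [Nat.add_right_comm]

theorem sum_antidiagonal_eq_ite_of_eq_zero (f : ℕ → ℕ → R) (k n : ℕ)
    (hf : ∀ i j, i < k → f i j = 0) :
    ∑ x ∈ antidiagonal n, f x.1 x.2 =
      if k ≤ n then ∑ x ∈ antidiagonal (n - k), f (k + x.1) x.2 else 0 := by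
  split_ifs with hkn
  · rw [← sum_antidiagonal_add_of_eq_zero f k _ hf, Nat.add_sub_cancel' hkn]
  · refine Finset.sum_eq_zero fun x hx ↦ hf _ _ ?_
    have := mem_antidiagonal.1 hx
    lia

theorem sum_range_ite_lt (f : ℕ → R) (m n : ℕ) :
    ∑ j ∈ range n, (if j < m then f j else 0) = ∑ j ∈ range (min n m), f j := by
  rw [← sum_filter]
  congr 1
  ext j
  simp only [mem_filter, mem_range, lt_min_iff]

end FiniteSums

/-! ### Gaussian binomial coefficients -/

section QChoose

open Finset Finset.Nat

variable {R : Type*} [CommSemiring R] (q : R)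

/-- The Gaussian binomial coefficient `[n choose k]` evaluated at `q`. The `q`-Pascal recursion is
taken as definition, which makes sense over every commutative semiring. -/
def qChoose : ℕ → ℕ → R
  | _, 0 => 1
  | 0, _ + 1 => 0
  | n + 1, k + 1 => qChoose n k + q ^ (k + 1) * qChoose n (k + 1)

@[simp]
theorem qChoose_zero_right (n : ℕ) : qChoose q n 0 = 1 := by
  cases n <;> rfl

theorem qChoose_succ_succ (n k : ℕ) :
    qChoose q (n + 1) (k + 1) = qChoose q n k + q ^ (k + 1) * qChoose q n (k + 1) :=
  rfl

theorem qChoose_eq_zero_of_lt {n k : ℕ} (h : n < k) : qChoose q n k = 0 := by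
  induction n generalizing k with
  | zero =>
    cases k with
    | zero => contradiction
    | succ k => rfl
  | succ n ih =>
    cases k with
    | zero => contradiction
    | succ k => rw [qChoose_succ_succ, ih (by lia), ih (by lia), mul_zero, add_zero]

@[simp]
theorem qChoose_self (n : ℕ) : qChoose q n n = 1 := by
  induction n with
  | zero => rfl
  | succ n ih =>
    rw [qChoose_succ_succ, ih, qChoose_eq_zero_of_lt q n.lt_succ_self, mul_zero, add_zero]

theorem qChoose_succ_succ' (n k : ℕ) :
    qChoose q (n + 1) (k + 1) = qChoose q n (k + 1) + q ^ (n - k) * qChoose q n k := by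
  induction n generalizing k with
  | zero => cases k <;> simp [qChoose]
  | succ n ih =>
    cases k with
    | zero =>
      rw [qChoose_succ_succ q (n + 1)]
      nth_rewrite 1 [ih]
      simp only [qChoose_succ_succ q n, qChoose_zero_right, Nat.sub_zero]
      ring
    | succ k =>
      rcases lt_or_ge k n with hkn | hkn
      · obtain ⟨d, rfl⟩ := Nat.exists_eq_add_of_lt hkn
        rw [qChoose_succ_succ q _ (k + 1)]
        nth_rewrite 1 [ih k]
        nth_rewrite 1 [ih (k + 1)]
        rw [qChoose_succ_succ q (k + d + 1), qChoose_succ_succ q (k + d + 1),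
          show k + d + 1 - k = d + 1 by lia, show k + d + 1 - (k + 1) = d by lia,
          show k + d + 1 + 1 - (k + 1) = d + 1 by lia]
        ring
      · rw [qChoose_succ_succ, qChoose_eq_zero_of_lt q (by lia : n + 1 < k + 1 + 1),
          Nat.sub_eq_zero_of_le (by lia)]
        ring

theorem qChoose_symm_add (a b : ℕ) : qChoose q (a + b) a = qChoose q (a + b) b := by
  induction a generalizing b with
  | zero => simp
  | succ a iha =>
    induction b with
    | zero => simp
    | succ b ihb =>
      rw [show a + 1 + (b + 1) = a + (b + 1) + 1 by lia, qChoose_succ_succ, iha,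
        qChoose_succ_succ', show a + (b + 1) = a + 1 + b by lia, ihb,
        Nat.add_sub_cancel]

theorem qChoose_mul_qChoose (a b c : ℕ) :
    qChoose q (a + b + c) a * qChoose q (b + c) b =
      qChoose q (a + b + c) (a + b) * qChoose q (a + b) a := by
  match a, b, c with
  | 0, _, _ => simp
  | _, 0, _ => simp
  | _, _, 0 => simp
  | a + 1, b + 1, c + 1 =>
    have ha := qChoose_mul_qChoose a (b + 1) (c + 1)
    have hb := qChoose_mul_qChoose (a + 1) b (c + 1)
    have hc := qChoose_mul_qChoose (a + 1) (b + 1) c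
    rw [show a + (b + 1) = a + b + 1 by lia] at ha
    rw [show a + 1 + b + (c + 1) = a + b + 1 + (c + 1) by lia,
      show a + 1 + b = a + b + 1 by lia] at hb
    rw [show a + 1 + (b + 1) + c = a + b + 1 + (c + 1) by lia,
      show a + 1 + (b + 1) = a + b + 1 + 1 by lia, show b + 1 + c = b + (c + 1) by lia] at hc
    rw [show a + 1 + (b + 1) + (c + 1) = a + b + 1 + (c + 1) + 1 by lia,
      show a + 1 + (b + 1) = a + b + 1 + 1 by lia]
    set N := a + b + 1 + (c + 1)
    calc
      qChoose q (N + 1) (a + 1) * qChoose q (b + 1 + (c + 1)) (b + 1) =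
          qChoose q N a * qChoose q (b + 1 + (c + 1)) (b + 1) +
          q ^ (a + 1) * qChoose q N (a + 1) * qChoose q (b + 1 + (c + 1)) (b + 1) := by
        rw [qChoose_succ_succ, add_mul]
      _ = qChoose q N a * qChoose q (b + 1 + (c + 1)) (b + 1) +
          q ^ (a + 1) * (qChoose q N (a + 1) * qChoose q (b + (c + 1)) b) +
          q ^ (a + b + 2) * (qChoose q N (a + 1) * qChoose q (b + (c + 1)) (b + 1)) := by
        rw [show qChoose q (b + 1 + (c + 1)) (b + 1) = qChoose q (b + (c + 1)) b +
          q ^ (b + 1) * qChoose q (b + (c + 1)) (b + 1) by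
            rw [← qChoose_succ_succ, Nat.add_right_comm]]
        ring
      _ = qChoose q N (a + b + 1) *
            (qChoose q (a + b + 1) a + q ^ (a + 1) * qChoose q (a + b + 1) (a + 1)) +
          q ^ (a + b + 2) * qChoose q N (a + b + 1 + 1) * qChoose q (a + b + 1 + 1) (a + 1) := by
        rw [ha, hb, hc]
        ring
      _ = qChoose q (N + 1) (a + b + 1 + 1) * qChoose q (a + b + 1 + 1) (a + 1) := by
        rw [← qChoose_succ_succ, ← add_mul, ← qChoose_succ_succ]

theorem qChoose_mul_qChoose_mul_qChoose_comm (k a j b : ℕ) :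
    qChoose q (k + a) k * qChoose q (k + a + (j + b)) (k + a) * qChoose q (j + b) j =
      qChoose q (k + b) k * qChoose q (k + b + (j + a)) (k + b) * qChoose q (j + a) j := by
  have hfactor (a b : ℕ) :
      qChoose q (k + a) k * qChoose q (k + a + (j + b)) (k + a) * qChoose q (j + b) j =
        qChoose q (k + (a + j + b)) k * (qChoose q (a + j + b) (a + j) * qChoose q (a + j) a) := by
    rw [← qChoose_mul_qChoose, mul_comm (qChoose q (k + a) k), ← qChoose_mul_qChoose, mul_assoc]
    simp only [add_assoc]
  have hcomm : qChoose q (a + j + b) (a + j) * qChoose q (a + j) a =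
      qChoose q (b + j + a) (b + j) * qChoose q (b + j) b := by
    rw [← qChoose_mul_qChoose q b, qChoose_symm_add q (a + j), qChoose_symm_add q a,
      show b + j + a = a + j + b by lia, add_comm a j]
  rw [hfactor, hfactor, hcomm, show a + j + b = b + j + a by lia]

theorem sum_antidiagonal_mul_qChoose_succ (f : ℕ → R) (n : ℕ) :
    ∑ x ∈ antidiagonal (n + 1), f x.1 * qChoose q (n + 1) x.1 =
      ∑ x ∈ antidiagonal n, f x.1 * qChoose q n x.1 +
        ∑ x ∈ antidiagonal n, f (x.1 + 1) * (q ^ x.2 * qChoose q n x.1) := by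
  have hsplit : ∑ x ∈ antidiagonal n, f x.1 * qChoose q n x.1 =
      f 0 + ∑ x ∈ antidiagonal n, f (x.1 + 1) * qChoose q n (x.1 + 1) := by
    have h := sum_antidiagonal_succ (n := n) (f := fun x ↦ f x.1 * qChoose q n x.1)
    rw [sum_antidiagonal_succ', qChoose_eq_zero_of_lt q n.lt_succ_self, mul_zero, zero_add] at h
    rw [h, qChoose_zero_right, mul_one]
  rw [hsplit, sum_antidiagonal_succ, qChoose_zero_right, mul_one, add_assoc, ← sum_add_distrib]
  congr 1
  refine sum_congr rfl fun x hx ↦ ?_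
  rw [qChoose_succ_succ', mul_add, ← mem_antidiagonal.1 hx, Nat.add_sub_cancel_left]

/-- The `q`-Vandermonde identity. -/
theorem qChoose_add_eq_sum (m n e : ℕ) :
    qChoose q (m + n) (n + e) =
      ∑ x ∈ antidiagonal n, q ^ (x.1 * (x.1 + e)) * qChoose q m (x.1 + e) * qChoose q n x.1 := by
  induction n generalizing e with
  | zero => simp
  | succ n ih =>
    rw [sum_antidiagonal_mul_qChoose_succ q (fun j ↦ q ^ (j * (j + e)) * qChoose q m (j + e)),
      ← ih e, ← add_assoc, Nat.add_right_comm n, qChoose_succ_succ, add_assoc n e 1, ih (e + 1),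
      mul_sum]
    congr 1
    refine sum_congr rfl fun x hx ↦ ?_
    rw [← mem_antidiagonal.1 hx, show x.1 + 1 + e = x.1 + (e + 1) by lia]
    ring

end QChoose

/-! ### Symmetry of the bounce recursion -/

section BounceRecursion

open Finset Finset.Nat

variable {R : Type*} [CommSemiring R] {q t : R} {F G : ℕ → ℕ → ℕ → R}

variable (q t F G) in
/-- The mutual recursion satisfied by the generating functions of the pairs of lattice paths that
remain ahead of the bounce path: for `F a r s` the bounce path is `a` steps east of the upper path,
and the lower path has `r` east and `s` north steps left; for `G a r s` the bounce path is `a` steps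
north of the lower path, and the upper path has `r` north and `s` east steps left. -/
structure BounceRecursion : Prop where
  left_zero : ∀ r s, F 0 r s = if r = 0 ∧ s = 0 then 1 else 0
  right_zero : ∀ r s, G 0 r s = if r = 0 ∧ s = 0 then 1 else 0
  left_succ : ∀ a r s, F (a + 1) r s =
    ∑ x ∈ antidiagonal s, qChoose q (a + x.1) a * G x.1 x.2 r
  right_succ : ∀ a r s, G (a + 1) r s =
    ∑ x ∈ antidiagonal s, qChoose q (a + x.1) a * (t ^ (r + x.2) * F x.1 x.2 r)

variable (q t F) in
/-- The coefficient of `qChoose q a (k + 1)` in the expansion of `F a s (k + r + 1)` as a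
combination of Gaussian binomials; see `BounceRecursion.left_eq_sum`. -/
def bounceKernel (k r s : ℕ) : R :=
  q ^ (k * (k + 1)) * ∑ x ∈ antidiagonal r, ∑ y ∈ antidiagonal s,
    qChoose q (k + x.1) k * qChoose q (k + x.1 + y.1) (k + x.1) * (t ^ (x.2 + y.2) * F y.1 y.2 x.2)

namespace BounceRecursion

theorem left_eq_one (h : BounceRecursion q t F G) (a : ℕ) : F a 0 0 = 1 := by
  cases a with
  | zero => simp [h.left_zero]
  | succ a => simp [h.left_succ, h.right_zero]

theorem left_eq_zero (h : BounceRecursion q t F G) (a r : ℕ) : F a (r + 1) 0 = 0 := by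
  cases a with
  | zero => simp [h.left_zero]
  | succ a => simp [h.left_succ, h.right_zero]

theorem left_eq_sum (h : BounceRecursion q t F G) (a r s : ℕ) :
    F a r (s + 1) =
      ∑ x ∈ antidiagonal s, qChoose q a (x.1 + 1) * bounceKernel q t F x.1 x.2 r := by
  cases a with
  | zero => simp [h.left_zero, qChoose]
  | succ a =>
    rw [h.left_succ, sum_antidiagonal_succ, h.right_zero, if_neg (by simp), mul_zero, zero_add]
    calc
      ∑ x ∈ antidiagonal s, qChoose q (a + (x.1 + 1)) a * G (x.1 + 1) x.2 r =
          ∑ x ∈ antidiagonal s, ∑ y ∈ antidiagonal x.1,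
            q ^ (y.1 * (y.1 + 1)) * qChoose q (a + 1) (y.1 + 1) * qChoose q (y.1 + y.2) y.1 *
              G (y.1 + y.2 + 1) x.2 r := by
        refine sum_congr rfl fun x _ ↦ ?_
        rw [qChoose_symm_add, ← add_assoc, Nat.add_right_comm, qChoose_add_eq_sum, sum_mul]
        exact sum_congr rfl fun y hy ↦ by rw [mem_antidiagonal.1 hy]
      _ = ∑ x ∈ antidiagonal s, ∑ y ∈ antidiagonal x.2,
            q ^ (x.1 * (x.1 + 1)) * qChoose q (a + 1) (x.1 + 1) * qChoose q (x.1 + y.1) x.1 *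
              G (x.1 + y.1 + 1) y.2 r := sum_antidiagonal_assoc (fun k c s' ↦
            q ^ (k * (k + 1)) * qChoose q (a + 1) (k + 1) * qChoose q (k + c) k *
              G (k + c + 1) s' r) s
      _ = _ := by
        simp only [bounceKernel, h.right_succ, mul_sum]
        refine sum_congr rfl fun x _ ↦ sum_congr rfl fun y _ ↦ sum_congr rfl fun z _ ↦ ?_
        ring

theorem sum_antidiagonal_left_zero (h : BounceRecursion q t F G) (k s : ℕ) :
    ∑ y ∈ antidiagonal s, qChoose q (k + y.1) k * (t ^ y.2 * F y.1 y.2 0) =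
      qChoose q (k + s) k := by
  cases s with
  | zero => simp [h.left_eq_one]
  | succ s => simp [sum_antidiagonal_succ', h.left_eq_one, h.left_eq_zero]

theorem bounceKernel_eq (h : BounceRecursion q t F G) (k r s : ℕ) :
    bounceKernel q t F k r s = q ^ (k * (k + 1)) *
      (qChoose q (k + r) k * qChoose q (k + r + s) (k + r) +
        ∑ j ∈ range (min r s), ∑ x ∈ antidiagonal (r - (j + 1)), ∑ y ∈ antidiagonal (s - (j + 1)),
          qChoose q (k + x.1) k * qChoose q (k + x.1 + (j + 1 + y.1)) (k + x.1) *
            qChoose q (j + 1 + y.1) (j + 1) *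
              (t ^ (j + 1 + x.2 + y.2) * bounceKernel q t F j x.2 y.2)) := by
  rw [bounceKernel]
  congr 1
  cases r with
  | zero => simpa using h.sum_antidiagonal_left_zero k s
  | succ r =>
    let term (j c r' b s' : ℕ) : R := qChoose q (k + c) k * qChoose q (k + c + b) (k + c) *
      qChoose q b (j + 1) * (t ^ (j + 1 + r' + s') * bounceKernel q t F j r' s')
    have hterm (j c r' : ℕ) : ∑ y ∈ antidiagonal s, term j c r' y.1 y.2 =
        if j + 1 ≤ s then ∑ y ∈ antidiagonal (s - (j + 1)), term j c r' (j + 1 + y.1) y.2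
        else 0 := by
      refine sum_antidiagonal_eq_ite_of_eq_zero _ _ _ fun b s' hb ↦ ?_
      simp only [term, qChoose_eq_zero_of_lt q hb, mul_zero, zero_mul]
    rw [sum_antidiagonal_succ']
    congr 1
    · simp only [mul_assoc, ← mul_sum, zero_add, h.sum_antidiagonal_left_zero]
    calc
      _ = ∑ x ∈ antidiagonal r, ∑ z ∈ antidiagonal x.2, ∑ y ∈ antidiagonal s,
            term z.1 x.1 z.2 y.1 y.2 := by
        refine sum_congr rfl fun x _ ↦ ?_
        rw [sum_comm]
        refine sum_congr rfl fun y _ ↦ ?_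
        rw [h.left_eq_sum, mul_sum, mul_sum]
        refine sum_congr rfl fun z hz ↦ ?_
        rw [← mem_antidiagonal.1 hz]
        ring
      _ = ∑ j ∈ range (r + 1), ∑ x ∈ antidiagonal (r - j), ∑ y ∈ antidiagonal s,
            term j x.1 x.2 y.1 y.2 := by
        rw [sum_antidiagonal_left_comm fun c j r' ↦ ∑ y ∈ antidiagonal s, term j c r' y.1 y.2,
          sum_antidiagonal_eq_sum_range_succ fun j p ↦
            ∑ x ∈ antidiagonal p, ∑ y ∈ antidiagonal s, term j x.1 x.2 y.1 y.2]
      _ = _ := by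
        rw [← sum_range_ite_lt]
        refine sum_congr rfl fun j _ ↦ ?_
        simp only [hterm, Nat.succ_le_iff]
        split_ifs
        · rw [Nat.add_sub_add_right]
        · exact sum_const_zero

theorem bounceKernel_comm (h : BounceRecursion q t F G) (k r s : ℕ) :
    bounceKernel q t F k r s = bounceKernel q t F k s r := by
  induction r using Nat.strong_induction_on generalizing k s with
  | _ r ih =>
    rw [h.bounceKernel_eq k r s, h.bounceKernel_eq k s r, min_comm s r]
    congr 2
    · simpa using qChoose_mul_qChoose_mul_qChoose_comm q k r 0 s
    · refine sum_congr rfl fun j hj ↦ ?_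
      rw [sum_comm]
      refine sum_congr rfl fun y _ ↦ sum_congr rfl fun x hx ↦ ?_
      have hjr : j < r := (mem_range.1 hj).trans_le (min_le_left _ _)
      have hxr : x.1 + x.2 = r - (j + 1) := mem_antidiagonal.1 hx
      rw [qChoose_mul_qChoose_mul_qChoose_comm, ih x.2 (by lia), add_right_comm (j + 1)]

theorem left_one_comm (h : BounceRecursion q t F G) (r s : ℕ) :
    F 1 r (s + 1) = F 1 s (r + 1) := by
  have hkernel (r s : ℕ) : F 1 r (s + 1) = bounceKernel q t F 0 s r := by
    rw [h.left_eq_sum]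
    cases s with
    | zero => simp
    | succ s => simp [sum_antidiagonal_succ, qChoose_eq_zero_of_lt]
  rw [hkernel, hkernel, h.bounceKernel_comm]

end BounceRecursion

end BounceRecursion

/-! ### Words in two letters -/

namespace Step

/-- The letter other than the given one. -/
def swap : Step → Step
  | E => N
  | N => E

@[simp]
theorem swap_E : E.swap = N :=
  rfl

@[simp]
theorem swap_N : N.swap = E :=
  rfl

@[simp]
theorem swap_swap (c : Step) : c.swap.swap = c := by
  cases c <;> rfl

@[simp]
theorem swap_ne (c : Step) : c.swap ≠ c := by
  cases c <;> decide

@[simp]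
theorem ne_swap (c : Step) : c ≠ c.swap := c.swap_ne.symm

theorem ne_iff {x c : Step} : x ≠ c ↔ x = c.swap := by
  cases x <;> cases c <;> decide

end Step

theorem count_add_count_swap (c : Step) (w : List Step) :
    w.count c + w.count c.swap = w.length := by
  induction w with
  | nil => rfl
  | cons x w ih =>
    by_cases hx : x = c
    · rw [hx, List.count_cons_self, List.count_cons_of_ne c.ne_swap, List.length_cons, ← ih]
      lia
    · rw [Step.ne_iff.1 hx, List.count_cons_self, List.count_cons_of_ne c.swap_ne,
        List.length_cons, ← ih, add_assoc]

/-- The number of pairs of letters of a word in which a letter other than `c` precedes `c`. -/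
def inversions (c : Step) : List Step → ℕ
  | [] => 0
  | x :: w => (if x = c then 0 else w.count c) + inversions c w

theorem inversions_append (c : Step) (u v : List Step) :
    inversions c (u ++ v) = inversions c u + inversions c v + u.count c.swap * v.count c := by
  induction u with
  | nil => simp [inversions]
  | cons x u ih =>
    by_cases hx : x = c
    · simp [inversions, ih, hx]
    · obtain rfl := Step.ne_iff.1 hx
      simp only [List.cons_append, inversions, if_neg hx, ih, List.count_append,
        List.count_cons_self]
      ring

theorem inversions_add_inversions_swap (c : Step) (w : List Step) :
    inversions c w + inversions c.swap w = w.count c * w.count c.swap := by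
  induction w with
  | nil => rfl
  | cons x w ih =>
    by_cases hx : x = c
    · subst hx
      simp only [inversions, if_true, if_neg x.ne_swap, List.count_cons_self,
        List.count_cons_of_ne x.ne_swap]
      linarith
    · obtain rfl := Step.ne_iff.1 hx
      simp only [inversions, if_true, if_neg hx, List.count_cons_self, List.count_cons_of_ne hx]
      linarith

theorem inversions_replicate (c : Step) (n : ℕ) (x : Step) :
    inversions c (List.replicate n x) = 0 := by
  induction n with
  | zero => rfl
  | succ n ih => simp +contextual [List.replicate_succ, inversions, ih, List.count_replicate]

theorem exists_eq_append_cons {c : Step} {a : ℕ} {u : List Step} (h : a < u.count c) :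
    ∃ u₁ u₂, u = u₁ ++ c :: u₂ ∧ u₁.count c = a := by
  induction u generalizing a with
  | nil => simp at h
  | cons x u ih =>
    by_cases hx : x = c
    · subst hx
      cases a with
      | zero => exact ⟨[], u, rfl, rfl⟩
      | succ a =>
        obtain ⟨u₁, u₂, rfl, hu₁⟩ := ih (by simpa using h)
        exact ⟨x :: u₁, u₂, rfl, by simp [hu₁]⟩
    · rw [List.count_cons_of_ne hx] at h
      obtain ⟨u₁, u₂, rfl, hu₁⟩ := ih h
      exact ⟨x :: u₁, u₂, rfl, by rw [List.count_cons_of_ne hx, hu₁]⟩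

theorem append_cons_inj {c : Step} {u₁ u₂ v₁ v₂ : List Step} (hcount : u₁.count c = v₁.count c)
    (h : u₁ ++ c :: u₂ = v₁ ++ c :: v₂) : u₁ = v₁ ∧ u₂ = v₂ := by
  induction u₁ generalizing v₁ with
  | nil =>
    cases v₁ with
    | nil => simpa using h
    | cons y v₁ =>
      obtain ⟨rfl, -⟩ := List.cons_eq_cons.1 h
      simp at hcount
  | cons x u₁ ih =>
    cases v₁ with
    | nil =>
      obtain ⟨rfl, -⟩ := List.cons_eq_cons.1 h
      simp at hcount
    | cons y v₁ =>
      obtain ⟨rfl, htail⟩ := List.cons_eq_cons.1 h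
      obtain ⟨rfl, rfl⟩ := ih (by simpa [List.count_cons] using hcount) htail
      exact ⟨rfl, rfl⟩

/-- The set of words with `a` letters `c` and `b` letters `c.swap`. -/
def words (c : Step) (a b : ℕ) : Finset (List Step) :=
  (List.replicate a c ++ List.replicate b c.swap).permutations.toFinset

theorem mem_words {c : Step} {a b : ℕ} {w : List Step} :
    w ∈ words c a b ↔ w.count c = a ∧ w.count c.swap = b := by
  rw [words, List.mem_toFinset, List.mem_permutations, List.perm_iff_count]
  constructor
  · intro h
    simp [h, List.count_replicate]
  · rintro ⟨rfl, rfl⟩ x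
    by_cases hx : x = c
    · simp [hx, List.count_replicate]
    · simp [Step.ne_iff.1 hx, List.count_replicate]

theorem words_zero_right (c : Step) (a : ℕ) : words c a 0 = {List.replicate a c} := by
  ext w
  simp [words, List.perm_replicate]

theorem words_zero_left (c : Step) (b : ℕ) : words c 0 b = {List.replicate b c.swap} := by
  ext w
  simp [words, List.perm_replicate]

theorem sum_words_succ_succ {M : Type*} [AddCommMonoid M] (c : Step) (a b : ℕ)
    (f : List Step → M) :
    ∑ w ∈ words c (a + 1) (b + 1), f w =
      ∑ w ∈ words c a (b + 1), f (c :: w) + ∑ w ∈ words c (a + 1) b, f (c.swap :: w) := by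
  have hunion : words c (a + 1) (b + 1) = (words c a (b + 1)).image (c :: ·) ∪
      (words c (a + 1) b).image (c.swap :: ·) := by
    ext w
    rcases w with _ | ⟨x, w⟩
    · simp [mem_words]
    · by_cases hx : x = c
      · simp [mem_words, hx]
      · simp [mem_words, Step.ne_iff.1 hx]
  rw [hunion, Finset.sum_union, Finset.sum_image (List.cons_injective.injOn),
    Finset.sum_image (List.cons_injective.injOn)]
  simp [Finset.disjoint_left]

theorem sum_words_pow_inversions {R : Type*} [CommSemiring R] (q : R) (c : Step) (a b : ℕ) :
    ∑ w ∈ words c a b, q ^ inversions c w = qChoose q (a + b) a := by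
  match a, b with
  | 0, b => simp [words_zero_left, inversions_replicate]
  | a + 1, 0 => simp [words_zero_right, inversions_replicate]
  | a + 1, b + 1 =>
    rw [sum_words_succ_succ, ← add_assoc, qChoose_succ_succ,
      ← sum_words_pow_inversions q c (a + 1) b, show a + 1 + b = a + (b + 1) by lia,
      ← sum_words_pow_inversions q c a (b + 1), Finset.mul_sum]
    congr 1
    · simp [inversions]
    · refine Finset.sum_congr rfl fun w hw ↦ ?_
      simp [inversions, (mem_words.1 hw).1, pow_add]

/-! ### Pairs of words and their statistics -/

/-- The word `u` ends at the same point as `l` prefixed by `a` letters `c`, and otherwise stays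
strictly on one side of it: before reaching the end, its prefixes contain strictly fewer letters `c`
than those of that word of the same length, provided this length is at least `a`. -/
structure Leads (c : Step) (a : ℕ) (u l : List Step) : Prop where
  count_eq : u.count c = a + l.count c
  count_swap_eq : u.count c.swap = l.count c.swap
  count_take_lt : ∀ i < l.length, (u.take (a + i)).count c < a + (l.take i).count c

theorem leads_zero {c : Step} {u l : List Step} : Leads c 0 u l ↔ u = [] ∧ l = [] := by
  constructor
  · intro h
    have hl : l = [] := by
      by_contra hl
      simpa using h.count_take_lt 0 (List.length_pos_iff.2 hl)
    refine ⟨List.length_eq_zero_iff.1 ?_, hl⟩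
    rw [← count_add_count_swap c, h.count_eq, h.count_swap_eq, hl]
    rfl
  · rintro ⟨rfl, rfl⟩
    exact ⟨rfl, rfl, by simp⟩

/-- Cutting `u` after its `(a + 1)`-st letter `c` exchanges the roles of the two words. -/
theorem leads_append_cons_iff {c : Step} {u₁ u₂ l : List Step} :
    Leads c (u₁.count c + 1) (u₁ ++ c :: u₂) l ↔ Leads c.swap (u₁.count c.swap) l u₂ := by
  set a := u₁.count c
  set b := u₁.count c.swap
  have hlength₁ := count_add_count_swap c u₁
  have hlength₂ := count_add_count_swap c u₂
  have hlength := count_add_count_swap c l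
  have htake (i : ℕ) : ((u₁ ++ c :: u₂).take (a + 1 + (b + i))).count c =
      a + 1 + (u₂.take i).count c := by
    rw [show a + 1 + (b + i) = u₁.length + (i + 1) by lia, List.take_length_add_append,
      List.take_succ_cons, List.count_append, List.count_cons_self]
    lia
  have hcount : (u₁ ++ c :: u₂).count c = a + 1 + u₂.count c := by
    rw [List.count_append, List.count_cons_self]
    lia
  have hswap : (u₁ ++ c :: u₂).count c.swap = b + u₂.count c.swap := by
    rw [List.count_append, List.count_cons_of_ne c.ne_swap]
  have hlt_iff (i : ℕ) (hi : i < u₂.length) (hil : b + i ≤ l.length) :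
      ((u₁ ++ c :: u₂).take (a + 1 + (b + i))).count c < a + 1 + (l.take (b + i)).count c ↔
        (l.take (b + i)).count c.swap < b + (u₂.take i).count c.swap := by
    have htake₂ := count_add_count_swap c (u₂.take i)
    have htakel := count_add_count_swap c (l.take (b + i))
    rw [List.length_take] at htake₂ htakel
    rw [htake]
    lia
  constructor
  · intro h
    have hc := h.count_eq
    have hs := h.count_swap_eq
    exact ⟨by lia, by rw [Step.swap_swap]; lia, fun i hi ↦
      (hlt_iff i hi (by lia)).1 (h.count_take_lt _ (by lia))⟩
  · intro h
    have hc := h.count_swap_eq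
    have hs := h.count_eq
    rw [Step.swap_swap] at hc
    refine ⟨by lia, by lia, fun i hi ↦ ?_⟩
    rcases lt_or_ge i b with hib | hib
    · rw [List.take_append_of_le_length (by lia)]
      have := (List.take_sublist (a + 1 + i) u₁).count_le c
      lia
    · obtain ⟨j, rfl⟩ := Nat.exists_eq_add_of_le hib
      exact (hlt_iff j (by lia) hi.le).2 (h.count_take_lt j (by lia))

theorem Leads.exists_eq_append_cons {c : Step} {a : ℕ} {u l : List Step}
    (h : Leads c (a + 1) u l) : ∃ u₁ u₂, u = u₁ ++ c :: u₂ ∧ u₁.count c = a :=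
  QtN.exists_eq_append_cons (by rw [h.count_eq]; lia)

theorem inversions_append_cons {c : Step} {u₁ u₂ l : List Step}
    (h : Leads c.swap (u₁.count c.swap) l u₂) {d : ℕ}
    (hd : inversions c.swap l = inversions c.swap u₂ + u₂.length + d) :
    inversions c (u₁ ++ c :: u₂) = inversions c l + l.length + (inversions c u₁ + d) := by
  have hc := h.count_swap_eq
  have hs := h.count_eq
  have hl := inversions_add_inversions_swap c l
  have hu₂ := inversions_add_inversions_swap c u₂
  rw [Step.swap_swap] at hc
  rw [hc, hs, mul_add] at hl
  rw [inversions_append, inversions, if_pos rfl, List.count_cons_self,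
    ← count_add_count_swap c l, hc, hs, zero_add]
  have := count_add_count_swap c u₂
  linarith [mul_comm (u₂.count c) (u₁.count c.swap)]

theorem Leads.inversions_add_length_le {c : Step} {a : ℕ} {u l : List Step} (h : Leads c a u l) :
    inversions c l + l.length ≤ inversions c u := by
  rcases a with _ | a
  · obtain ⟨rfl, rfl⟩ := leads_zero.1 h
    rfl
  obtain ⟨u₁, u₂, hu, rfl⟩ := h.exists_eq_append_cons
  have hrest := leads_append_cons_iff.1 (hu ▸ h)
  obtain ⟨d, hd⟩ := Nat.exists_eq_add_of_le hrest.inversions_add_length_le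
  rw [hu, inversions_append_cons hrest hd]
  exact Nat.le_add_right _ _
termination_by u.length + l.length
decreasing_by
  rw [hu, List.length_append, List.length_cons]
  lia

/-- The area between the words of a pair satisfying `Leads`, less the number of letters of the
second word. -/
def areaExcess (c : Step) (u l : List Step) : ℕ :=
  inversions c u - (inversions c l + l.length)

theorem areaExcess_append_cons {c : Step} {u₁ u₂ l : List Step}
    (h : Leads c.swap (u₁.count c.swap) l u₂) :
    areaExcess c (u₁ ++ c :: u₂) l = inversions c u₁ + areaExcess c.swap l u₂ := by
  obtain ⟨d, hd⟩ := Nat.exists_eq_add_of_le h.inversions_add_length_le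
  rw [areaExcess, inversions_append_cons h hd, areaExcess, hd, Nat.add_sub_cancel_left,
    Nat.add_sub_cancel_left]

/-- The bounce statistic of a pair of words, not counting the first east-to-north turn. The bounce
path, running in direction `c.swap`, meets the first word at the `a`-th letter `c` from now and then
turns; `b` is the number of letters `c.swap` of this word it has already passed since its last turn.
When it turns north (`c = N`), each of its remaining steps counts once more. -/
def bounceSum (c : Step) (a b : ℕ) : List Step → List Step → ℕ
  | _, [] => 0
  | [], _ => 0
  | x :: u, l =>
    if x = c then
      if a ≤ 1 then (if c = Step.N then u.length else 0) + bounceSum c.swap b 0 l u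
      else bounceSum c (a - 1) b u l
    else bounceSum c a (b + 1) u l
termination_by u l => u.length + l.length

@[simp]
theorem bounceSum_nil_right (c : Step) (a b : ℕ) (u : List Step) : bounceSum c a b u [] = 0 := by
  rw [bounceSum]

theorem bounceSum_cons {l : List Step} (hl : l ≠ []) (c : Step) (a b : ℕ) (x : Step)
    (u : List Step) : bounceSum c a b (x :: u) l =
      if x = c then
        if a ≤ 1 then (if c = Step.N then u.length else 0) + bounceSum c.swap b 0 l u
        else bounceSum c (a - 1) b u l
      else bounceSum c a (b + 1) u l := by
  rw [bounceSum]
  exact hl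

theorem bounceSum_append_cons {c : Step} {a b : ℕ} {u₁ u₂ l : List Step} (hl : l ≠ [])
    (ha : u₁.count c = a) :
    bounceSum c (a + 1) b (u₁ ++ c :: u₂) l =
      (if c = Step.N then u₂.length else 0) + bounceSum c.swap (b + u₁.count c.swap) 0 l u₂ := by
  induction u₁ generalizing a b with
  | nil =>
    subst ha
    rw [List.nil_append, bounceSum_cons hl]
    simp
  | cons x u₁ ih =>
    rw [List.cons_append, bounceSum_cons hl]
    by_cases hx : x = c
    · subst hx
      rw [List.count_cons_self] at ha
      rw [← ha, if_pos rfl, if_neg (by lia), Nat.add_sub_cancel, ih rfl,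
        List.count_cons_of_ne x.ne_swap]
    · rw [List.count_cons_of_ne hx] at ha
      rw [if_neg hx, ih ha, Step.ne_iff.1 hx, List.count_cons_self]
      congr 2
      lia

open Classical in
/-- The pairs of words satisfying `Leads c a` whose second word has `r` letters `c` and `s` letters
`c.swap`. -/
noncomputable def leadPairs (c : Step) (a r s : ℕ) : Finset (List Step × List Step) :=
  (words c (a + r) s ×ˢ words c r s).filter fun p ↦ Leads c a p.1 p.2

theorem mem_leadPairs {c : Step} {a r s : ℕ} {p : List Step × List Step} :
    p ∈ leadPairs c a r s ↔ Leads c a p.1 p.2 ∧ p.2.count c = r ∧ p.2.count c.swap = s := by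
  simp only [leadPairs, Finset.mem_filter, Finset.mem_product, mem_words]
  constructor
  · rintro ⟨⟨-, h⟩, hp⟩
    exact ⟨hp, h⟩
  · rintro ⟨hp, rfl, rfl⟩
    exact ⟨⟨⟨hp.count_eq, hp.count_swap_eq⟩, rfl, rfl⟩, hp⟩

open Finset.HasAntidiagonal in
theorem sum_leadPairs_succ {M : Type*} [AddCommMonoid M] (f : List Step → List Step → M)
    (c : Step) (a r s : ℕ) :
    ∑ p ∈ leadPairs c (a + 1) r s, f p.1 p.2 =
      ∑ x ∈ antidiagonal s, ∑ u ∈ words c a x.1, ∑ p ∈ leadPairs c.swap x.1 x.2 r,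
        f (u ++ c :: p.2) p.1 := by
  simp only [← Finset.sum_product', Finset.sum_sigma']
  symm
  refine Finset.sum_bij (fun y _ ↦ (y.2.1 ++ c :: y.2.2.2, y.2.2.1)) ?_ ?_ ?_ fun _ _ ↦ rfl
  · rintro ⟨⟨b, s'⟩, u, l, v⟩ h
    simp only [Finset.mem_sigma, Finset.mem_product, mem_words, mem_leadPairs,
      mem_antidiagonal, Step.swap_swap] at h
    obtain ⟨rfl, ⟨rfl, rfl⟩, hlead, rfl, rfl⟩ := h
    exact mem_leadPairs.2 ⟨leads_append_cons_iff.2 hlead,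
      by simpa using hlead.count_swap_eq, hlead.count_eq⟩
  · rintro ⟨⟨b, s'⟩, u, l, v⟩ h ⟨⟨b', t'⟩, u', l', v'⟩ h' heq
    simp only [Finset.mem_sigma, Finset.mem_product, mem_words, mem_leadPairs,
      mem_antidiagonal] at h h'
    obtain ⟨rfl, ⟨rfl, rfl⟩, -, rfl, -⟩ := h
    obtain ⟨-, ⟨hcount, rfl⟩, -, rfl, -⟩ := h'
    obtain ⟨happend, rfl⟩ := Prod.mk.inj heq
    obtain ⟨rfl, rfl⟩ := append_cons_inj hcount.symm happend
    rfl
  · rintro ⟨u, l⟩ h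
    obtain ⟨hlead, rfl, rfl⟩ := mem_leadPairs.1 h
    obtain ⟨u₁, u₂, rfl, rfl⟩ := hlead.exists_eq_append_cons
    have hrest := leads_append_cons_iff.1 hlead
    refine ⟨⟨(u₁.count c.swap, u₂.count c.swap), u₁, l, u₂⟩, ?_, rfl⟩
    simp only [Finset.mem_sigma, Finset.mem_product, mem_words, mem_leadPairs,
      mem_antidiagonal, Step.swap_swap]
    exact ⟨hrest.count_eq.symm, ⟨trivial, trivial⟩, hrest, trivial,
      by simpa using hrest.count_swap_eq.symm⟩

theorem Leads.bounceSum_append_cons {c : Step} {u₁ u₂ l : List Step}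
    (h : Leads c.swap (u₁.count c.swap) l u₂) :
    bounceSum c (u₁.count c + 1) 0 (u₁ ++ c :: u₂) l =
      (if c = Step.N then u₂.length else 0) + bounceSum c.swap (u₁.count c.swap) 0 l u₂ := by
  rcases eq_or_ne l [] with rfl | hl
  · have hu₂ : u₂ = [] := by
      have h₁ := h.count_eq
      have h₂ := h.count_swap_eq
      have := count_add_count_swap c.swap u₂
      rw [List.count_nil] at h₁ h₂
      exact List.length_eq_zero_iff.1 (by lia)
    simp [hu₂]
  · rw [QtN.bounceSum_append_cons hl rfl, Nat.zero_add]

section GeneratingFunction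

variable {R : Type*} [CommSemiring R] (q t : R)

/-- The generating function of `leadPairs c a r s` by the area between the words and the bounce
statistic. -/
noncomputable def leadSum (c : Step) (a r s : ℕ) : R :=
  ∑ p ∈ leadPairs c a r s, q ^ areaExcess c p.1 p.2 * t ^ bounceSum c a 0 p.1 p.2

theorem leadSum_zero (c : Step) (r s : ℕ) :
    leadSum q t c 0 r s = if r = 0 ∧ s = 0 then 1 else 0 := by
  have hpairs : leadPairs c 0 r s = if r = 0 ∧ s = 0 then {([], [])} else ∅ := by
    ext ⟨u, l⟩
    rw [mem_leadPairs, leads_zero]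
    split_ifs with h
    · simp +contextual [Prod.ext_iff, h]
    · simp only [Finset.notMem_empty, iff_false]
      rintro ⟨⟨rfl, rfl⟩, rfl, rfl⟩
      exact h ⟨rfl, rfl⟩
  rw [leadSum, hpairs]
  split_ifs <;> simp [areaExcess, inversions]

open Finset.HasAntidiagonal in
theorem leadSum_succ (c : Step) (a r s : ℕ) :
    leadSum q t c (a + 1) r s = ∑ x ∈ antidiagonal s, qChoose q (a + x.1) a *
      ((if c = Step.N then t ^ (r + x.2) else 1) * leadSum q t c.swap x.1 x.2 r) := by
  rw [leadSum, sum_leadPairs_succ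
    (fun u l ↦ q ^ areaExcess c u l * t ^ bounceSum c (a + 1) 0 u l)]
  refine Finset.sum_congr rfl fun x _ ↦ ?_
  rw [← sum_words_pow_inversions q c, Finset.sum_mul]
  refine Finset.sum_congr rfl fun u hu ↦ ?_
  rw [leadSum, Finset.mul_sum, Finset.mul_sum]
  refine Finset.sum_congr rfl fun p hp ↦ ?_
  obtain ⟨rfl, hx⟩ := mem_words.1 hu
  obtain ⟨hlead, hs, hr⟩ := mem_leadPairs.1 hp
  rw [Step.swap_swap] at hr
  rw [← hx] at hlead ⊢
  rw [areaExcess_append_cons hlead, hlead.bounceSum_append_cons, ← count_add_count_swap c, hr, hs,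
    pow_add, pow_add, apply_ite (t ^ ·), pow_zero]
  ring

theorem bounceRecursion_leadSum :
    BounceRecursion q t (leadSum q t Step.E) (leadSum q t Step.N) where
  left_zero := leadSum_zero q t Step.E
  right_zero := leadSum_zero q t Step.N
  left_succ a r s := by simp [leadSum_succ q t Step.E]
  right_succ a r s := by simp [leadSum_succ q t Step.N]

end GeneratingFunction

open Polynomial in
theorem coeff_coeff_sum_pow_mul_pow {α : Type*} (s : Finset α) (f g : α → ℕ) (u v : ℕ) :
    ((∑ x ∈ s, (C X : ℕ[X][X]) ^ f x * X ^ g x).coeff v).coeff u =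
      (s.filter fun x ↦ f x = u ∧ g x = v).card := by
  rw [finsetSum_coeff, finsetSum_coeff, Finset.card_filter]
  refine Finset.sum_congr rfl fun x _ ↦ ?_
  rw [← C_pow, coeff_C_mul_X_pow]
  by_cases hv : v = g x
  · simp [hv, coeff_X_pow, eq_comm]
  · simp [hv, Ne.symm hv]

/-- The number of pairs of words from `leadPairs Step.E 1 r s` with given area and bounce. -/
noncomputable def leadCount (r s u v : ℕ) : ℕ :=
  ((leadPairs Step.E 1 r s).filter fun p ↦
    areaExcess Step.E p.1 p.2 = u ∧ bounceSum Step.E 1 0 p.1 p.2 = v).card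

open Polynomial in
theorem leadCount_succ_comm (r s u v : ℕ) : leadCount r (s + 1) u v = leadCount s (r + 1) u v := by
  rw [leadCount, leadCount, ← coeff_coeff_sum_pow_mul_pow, ← coeff_coeff_sum_pow_mul_pow]
  exact congrArg (fun P : ℕ[X][X] ↦ (P.coeff v).coeff u)
    ((bounceRecursion_leadSum (C X : ℕ[X][X]) X).left_one_comm r s)

theorem card_eq_leadCount {α : Type*} {f : α → List Step × List Step} {r s : ℕ}
    (hf : Set.BijOn f Set.univ (leadPairs Step.E 1 r s)) (stat₁ stat₂ : α → ℕ)
    (h₁ : ∀ x, areaExcess Step.E (f x).1 (f x).2 = stat₁ x)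
    (h₂ : ∀ x, bounceSum Step.E 1 0 (f x).1 (f x).2 = stat₂ x) (u v : ℕ) :
    Nat.card {x // stat₁ x = u ∧ stat₂ x = v} = leadCount r s u v := by
  change Set.ncard {x | stat₁ x = u ∧ stat₂ x = v} = _
  rw [leadCount, ← Set.ncard_coe_finset]
  refine Set.ncard_congr (fun x _ ↦ f x) ?_ (fun x y _ _ h ↦ hf.injOn trivial trivial h) ?_
  · intro x hx
    exact Finset.mem_coe.2 (Finset.mem_filter.2 ⟨hf.mapsTo trivial, by rwa [h₁, h₂]⟩)
  · intro p hp
    obtain ⟨hpairs, hstat⟩ := Finset.mem_filter.1 (Finset.mem_coe.1 hp)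
    obtain ⟨x, -, rfl⟩ := hf.surjOn hpairs
    rw [h₁, h₂] at hstat
    exact ⟨x, hstat, rfl⟩

/-! ### Parallelogram polyominoes -/

theorem colHeightsAux_getD_append_cons (w₁ w₂ : List Step) (h : ℕ) :
    (colHeightsAux (w₁ ++ Step.E :: w₂) h).getD (w₁.count Step.E) 0 = h + w₁.count Step.N := by
  induction w₁ generalizing h with
  | nil => simp [colHeightsAux]
  | cons x w₁ ih =>
    cases x
    · simp only [List.cons_append, colHeightsAux, List.count_cons_self, List.getD_cons_succ, ih]
      simp
    · simp only [List.cons_append, colHeightsAux, List.count_cons_self]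
      rw [List.count_cons_of_ne (by decide), ih]
      lia

theorem colHeight_append_cons (w₁ w₂ : List Step) :
    colHeight (w₁ ++ Step.E :: w₂) (w₁.count Step.E) = w₁.count Step.N := by
  rw [colHeight, colHeightsAux_getD_append_cons, Nat.zero_add]

theorem colHeight_append_le {w₁ w₂ : List Step} {i : ℕ} (hi : i < w₁.count Step.E) :
    colHeight (w₁ ++ w₂) i ≤ w₁.count Step.N := by
  obtain ⟨v₁, v₂, rfl, rfl⟩ := exists_eq_append_cons hi
  rw [List.append_assoc, List.cons_append, colHeight_append_cons, List.count_append]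
  exact Nat.le_add_right _ _

theorem le_colHeight_append {w₁ w₂ : List Step} {i : ℕ} (hle : w₁.count Step.E ≤ i)
    (hlt : i < (w₁ ++ w₂).count Step.E) : w₁.count Step.N ≤ colHeight (w₁ ++ w₂) i := by
  rw [List.count_append] at hlt
  obtain ⟨v₁, v₂, rfl, hv₁⟩ :=
    exists_eq_append_cons (show i - w₁.count Step.E < w₂.count Step.E by lia)
  obtain rfl : (w₁ ++ v₁).count Step.E = i := by
    rw [List.count_append]
    lia
  rw [← List.append_assoc, colHeight_append_cons, List.count_append]
  exact Nat.le_add_right _ _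

theorem colHeight_le_iff {w : List Step} {i h : ℕ} (hi : i < w.count Step.E) :
    colHeight w i ≤ h ↔ i < (w.take (i + 1 + h)).count Step.E := by
  have hlength := count_add_count_swap Step.E (w.take (i + 1 + h))
  rw [List.length_take, Step.swap_E] at hlength
  have hw := List.take_append_drop (i + 1 + h) w
  constructor
  · intro hle
    by_contra! hcon
    have hge := le_colHeight_append (w₂ := w.drop (i + 1 + h)) hcon (by rwa [hw])
    have hwlength : w.length ≤ i + h := by
      rw [hw] at hge
      lia
    rw [List.take_of_length_le (by lia)] at hcon
    exact hi.not_ge hcon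
  · intro hlt
    have hle := colHeight_append_le (w₂ := w.drop (i + 1 + h)) hlt
    rw [hw] at hle
    lia

theorem sum_colHeight (w : List Step) :
    ∑ i ∈ Finset.range (w.count Step.E), colHeight w i = inversions Step.E w := by
  have haux (h : ℕ) : ∑ i ∈ Finset.range (w.count Step.E), (colHeightsAux w h).getD i 0 =
      h * w.count Step.E + inversions Step.E w := by
    induction w generalizing h with
    | nil => rfl
    | cons x w ih =>
      cases x
      · simp only [colHeightsAux, List.count_cons_self, Finset.sum_range_succ',
          List.getD_cons_succ, List.getD_cons_zero, ih, inversions, if_true]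
        ring
      · rw [List.count_cons_of_ne (by decide)]
        simp only [colHeightsAux, ih, inversions, reduceCtorEq, if_false]
        ring
  exact (haux 0).trans (by rw [Nat.zero_mul, Nat.zero_add])

theorem forall_colHeight_le_iff {U L : List Step} {m : ℕ} (hU : U.count Step.E = m)
    (hL : L.count Step.E = m) : (∀ i < m, colHeight L i ≤ colHeight U i) ↔
      ∀ j, (U.take j).count Step.E ≤ (L.take j).count Step.E := by
  constructor
  · intro h j
    by_contra! hlt
    set i := (L.take j).count Step.E with hi
    have him : i < m := by
      have := (List.take_sublist j U).count_le Step.E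
      lia
    have hij : i + 1 ≤ j :=
      (Nat.succ_le_of_lt hlt).trans (List.count_le_length.trans (List.length_take_le _ _))
    obtain ⟨k, hk⟩ := Nat.exists_eq_add_of_le hij
    rw [hk] at hi hlt
    exact hi.ge.not_gt <| (colHeight_le_iff (hL ▸ him)).1 <|
      (h i him).trans ((colHeight_le_iff (hU ▸ him)).2 hlt)
  · intro h i hi
    exact (colHeight_le_iff (hL ▸ hi)).2
      (((colHeight_le_iff (hU ▸ hi)).1 le_rfl).trans_le (h _))

theorem mem_pathPts {w : List Step} {p : ℕ × ℕ} :
    p ∈ pathPts w ↔ p.1 + p.2 ≤ w.length ∧ (w.take (p.1 + p.2)).count Step.E = p.1 := by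
  have hlength (i : ℕ) := count_add_count_swap Step.E (w.take i)
  simp only [List.length_take, Step.swap_E] at hlength
  simp only [pathPts, pathPos, countE, countN, List.mem_toFinset, List.mem_map, List.mem_range]
  constructor
  · rintro ⟨i, hi, rfl⟩
    have hsum : (w.take i).count Step.E + (w.take i).count Step.N = i := by
      rw [hlength]
      lia
    exact ⟨by rw [hsum]; lia, by rw [hsum]⟩
  · rintro ⟨hle, hp⟩
    refine ⟨p.1 + p.2, by lia, Prod.ext hp ?_⟩
    have := hlength (p.1 + p.2)
    simp only
    lia

theorem pathPts_inter_pathPts_eq_iff {U L : List Step} {m n : ℕ} (hUE : U.count Step.E = m)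
    (hUN : U.count Step.N = n) (hLE : L.count Step.E = m) (hLN : L.count Step.N = n) :
    pathPts U ∩ pathPts L = {(0, 0), (m, n)} ↔
      ∀ j, 0 < j → j < m + n → (U.take j).count Step.E ≠ (L.take j).count Step.E := by
  have hU : U.length = m + n := by rw [← count_add_count_swap Step.E, hUE, Step.swap_E, hUN]
  have hL : L.length = m + n := by rw [← count_add_count_swap Step.E, hLE, Step.swap_E, hLN]
  constructor
  · intro h j hj hjmn heq
    have hcount : (U.take j).count Step.E ≤ j :=
      List.count_le_length.trans (List.length_take_le _ _)
    have hmem : ((U.take j).count Step.E, j - (U.take j).count Step.E) ∈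
        pathPts U ∩ pathPts L := by
      simp only [Finset.mem_inter, mem_pathPts, Nat.add_sub_cancel' hcount]
      exact ⟨⟨by lia, trivial⟩, by lia, heq.symm⟩
    rw [h] at hmem
    simp only [Finset.mem_insert, Finset.mem_singleton, Prod.mk.injEq] at hmem
    lia
  · intro h
    ext ⟨x, y⟩
    simp only [Finset.mem_inter, mem_pathPts, Finset.mem_insert, Finset.mem_singleton,
      Prod.mk.injEq]
    constructor
    · rintro ⟨⟨hle, hx⟩, -, hx'⟩
      rcases Nat.eq_zero_or_pos (x + y) with h0 | hpos
      · exact Or.inl (by lia)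
      · have hxy : ¬ x + y < m + n := fun hlt ↦ h _ hpos hlt (hx.trans hx'.symm)
        rw [List.take_of_length_le (by lia)] at hx
        exact Or.inr (by lia)
    · rintro (⟨rfl, rfl⟩ | ⟨rfl, rfl⟩)
      · simp
      · rw [List.take_of_length_le hU.le, List.take_of_length_le hL.le]
        exact ⟨⟨hU.ge, hUE⟩, hL.ge, hLE⟩

/-- The words `u` and `E :: l` are the upper and the lower path of a polyomino exactly when
`Leads E 1 u l` holds. -/
theorem above_and_meet_iff {u l : List Step} {m n : ℕ} (huE : u.count Step.E = m)
    (huN : u.count Step.N = n) (hlE : (Step.E :: l).count Step.E = m)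
    (hlN : (Step.E :: l).count Step.N = n) :
    ((∀ i < m, colHeight (Step.E :: l) i ≤ colHeight u i) ∧
      pathPts u ∩ pathPts (Step.E :: l) = {(0, 0), (m, n)}) ↔ Leads Step.E 1 u l := by
  have hlength := count_add_count_swap Step.E (Step.E :: l)
  rw [Step.swap_E, hlE, hlN, List.length_cons] at hlength
  rw [forall_colHeight_le_iff huE hlE, pathPts_inter_pathPts_eq_iff huE huN hlE hlN]
  rw [List.count_cons_self] at hlE
  rw [List.count_cons_of_ne (by decide)] at hlN
  have htake (i : ℕ) : ((Step.E :: l).take (1 + i)).count Step.E =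
      1 + (l.take i).count Step.E := by
    rw [Nat.add_comm, List.take_succ_cons, List.count_cons_self, Nat.add_comm]
  constructor
  · rintro ⟨hle, hne⟩
    refine ⟨by lia, huN.trans hlN.symm, fun i hi ↦ ?_⟩
    rw [← htake]
    exact (hle _).lt_of_ne (hne _ (by lia) (by lia))
  · intro h
    have hlt (j : ℕ) (hj : 0 < j) (hjmn : j < m + n) :
        (u.take j).count Step.E < ((Step.E :: l).take j).count Step.E := by
      obtain ⟨i, rfl⟩ := Nat.exists_eq_add_of_le (Nat.succ_le_of_lt hj)
      rw [htake]
      exact h.count_take_lt i (by lia)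
    refine ⟨fun j ↦ ?_, fun j hj hjmn ↦ (hlt j hj hjmn).ne⟩
    rcases Nat.eq_zero_or_pos j with rfl | hj
    · simp
    rcases lt_or_ge j (m + n) with hjmn | hjmn
    · exact (hlt j hj hjmn).le
    · rw [List.take_of_length_le (l := Step.E :: l) (by rw [List.length_cons]; lia),
        List.count_cons_self, hlE, ← huE]
      exact (List.take_sublist j u).count_le Step.E

theorem eastTarget_eq {h : ℕ → ℕ} {m x y z : ℕ} (hxz : x ≤ z) (hzm : z ≤ m)
    (hlt : ∀ i < z, h i < y) (hge : z < m → y ≤ h z) : eastTarget h m x y = z := by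
  rw [eastTarget, List.headD_eq_head?_getD, List.head?_filter]
  rcases hzm.eq_or_lt with rfl | hzm
  · have hnone : (List.range z).find? (fun i ↦ decide (x ≤ i ∧ y ≤ h i)) = none := by
      rw [List.find?_range_eq_none]
      intro i hi
      simp [(hlt i hi).not_ge]
    rw [hnone, Option.getD_none]
  · have hsome : (List.range m).find? (fun i ↦ decide (x ≤ i ∧ y ≤ h i)) = some z := by
      rw [List.find?_range_eq_some]
      refine ⟨by simpa using ⟨hxz, hge hzm⟩, List.mem_range.2 hzm, fun i hi ↦ ?_⟩
      simp [(hlt i hi).not_ge]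
    rw [hsome, Option.getD_some]

theorem eastTarget_colHeight {w₁ w₂ : List Step} {x : ℕ} (hx : x ≤ w₁.count Step.E) :
    eastTarget (colHeight (w₁ ++ Step.N :: w₂)) ((w₁ ++ Step.N :: w₂).count Step.E) x
      (w₁.count Step.N + 1) = w₁.count Step.E := by
  refine eastTarget_eq hx (by rw [List.count_append]; lia)
    (fun i hi ↦ Nat.lt_succ_of_le (colHeight_append_le hi)) fun hlt ↦ ?_
  have happend : w₁ ++ Step.N :: w₂ = (w₁ ++ [Step.N]) ++ w₂ := by simp
  rw [happend] at hlt ⊢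
  simpa using le_colHeight_append (by simp) hlt

theorem Leads.eq_nil_of_count_swap_eq_zero {c : Step} {a : ℕ} {u l : List Step}
    (h : Leads c a u l) (hl : l.count c.swap = 0) : l = [] := by
  by_contra hne
  have hlt := h.count_take_lt 0 (List.length_pos_iff.2 hne)
  have hcount := count_add_count_swap c (u.take a)
  have hswap := (List.take_sublist a u).count_le c.swap
  have hlength := count_add_count_swap c u
  have hc := h.count_eq
  rw [h.count_swap_eq, hl] at hswap
  rw [List.length_take] at hcount
  simp only [Nat.add_zero, List.take_zero, List.count_nil] at hlt
  lia

theorem bounceAux_succ {U L U₁ U₂ L₀ l₁ L₂ : List Step} (hU : U = U₁ ++ Step.E :: U₂)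
    (hL : L = L₀ ++ l₁ ++ Step.N :: L₂) (hE : L₀.count Step.E = U₁.count Step.E + 1)
    (hN : U₁.count Step.N = (L₀ ++ l₁).count Step.N + 1) (hL₂ : L₂.count Step.N = 0 → L₂ = [])
    (fuel j : ℕ) :
    bounceAux (colHeight U) (colHeight L) (L.count Step.E) (L.count Step.N) (fuel + 1)
      (L₀.count Step.E) (L₀.count Step.N) j = (j + 1) * (l₁.length + 1) +
        bounceAux (colHeight U) (colHeight L) (L.count Step.E) (L.count Step.N) fuel
          ((L₀ ++ l₁ ++ [Step.N]).count Step.E) ((L₀ ++ l₁ ++ [Step.N]).count Step.N) (j + 1) := by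
  have hheight : colHeight U (L₀.count Step.E - 1) = (L₀ ++ l₁).count Step.N + 1 := by
    rw [hU, hE, Nat.add_sub_cancel, colHeight_append_cons, hN]
  have htarget : (if (L₀ ++ l₁).count Step.N + 1 = L.count Step.N then L.count Step.E
      else eastTarget (colHeight L) (L.count Step.E) (L₀.count Step.E)
        ((L₀ ++ l₁).count Step.N + 1)) = (L₀ ++ l₁).count Step.E := by
    split_ifs with htop
    · simp only [hL, List.count_append, List.count_cons_self] at htop
      rw [hL, hL₂ (by lia)]
      simp
    · rw [hL]
      exact eastTarget_colHeight (by simp)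
  have hunfinished : ¬ (L₀.count Step.E = L.count Step.E ∧ L₀.count Step.N = L.count Step.N) := by
    simp [hL]
  have hlength := count_add_count_swap Step.E l₁
  rw [Step.swap_E] at hlength
  rw [bounceAux, if_neg hunfinished]
  simp only [hheight, htarget, ← hlength]
  simp only [List.count_append, List.count_singleton_self, List.count_singleton]
  congr 2
  lia

/-- Every step yet to be made by the bounce path counts the turns made so far and the turn coming
next; `bounceSum` accounts for the turns made after that. -/
theorem bounceAux_eq {a : ℕ} {U L U₀ L₀ u l : List Step} (h : Leads Step.E a u l)
    (hU : U = U₀ ++ u) (hL : L = L₀ ++ l) (hE : L₀.count Step.E = U₀.count Step.E + a)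
    (hN : L₀.count Step.N = U₀.count Step.N) {fuel : ℕ} (hfuel : l.length < fuel) (j : ℕ) :
    bounceAux (colHeight U) (colHeight L) (L.count Step.E) (L.count Step.N) fuel
      (L₀.count Step.E) (L₀.count Step.N) j =
      (j + 1) * l.length + bounceSum Step.E a 0 u l := by
  induction fuel generalizing a U₀ L₀ u l j with
  | zero => exact absurd hfuel (Nat.not_lt_zero _)
  | succ fuel ih =>
    rcases eq_or_ne l [] with rfl | hl
    · simp [hL, bounceAux]
    rcases a with _ | a
    · exact absurd (leads_zero.1 h).2 hl
    obtain ⟨u₁, u₂, rfl, rfl⟩ := h.exists_eq_append_cons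
    have hnext := leads_append_cons_iff.1 h
    rw [hnext.bounceSum_append_cons]
    rw [Step.swap_E] at hnext ⊢
    obtain ⟨b, hb⟩ := Nat.exists_eq_succ_of_ne_zero
      fun (hb : u₁.count Step.N = 0) ↦ hl (leads_zero.1 (hb ▸ hnext)).1
    rw [hb] at hnext ⊢
    obtain ⟨l₁, l₂, rfl, rfl⟩ := hnext.exists_eq_append_cons
    have hrest := leads_append_cons_iff.1 hnext
    rw [hrest.bounceSum_append_cons]
    rw [Step.swap_N] at hrest ⊢
    rw [bounceAux_succ (U₁ := U₀ ++ u₁) (l₁ := l₁) (by rw [hU, List.append_assoc])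
      (by rw [hL, List.append_assoc]) (by rw [hE, List.count_append, add_assoc])
      (by rw [List.count_append, List.count_append, hb, hN]; rfl)
      hrest.eq_nil_of_count_swap_eq_zero,
      ih hrest (U₀ := U₀ ++ u₁ ++ [Step.E]) (by simp [hU]) (by simp [hL])
        (by simp [hE]) (by simp [hN, hb]) (by simp at hfuel; lia)]
    simp only [List.length_append, List.length_cons, reduceCtorEq, if_true, if_false]
    ring

theorem Polyomino.exists_lower_eq_cons {m n : ℕ} (P : Polyomino m n) (hm : 0 < m) (hn : 0 < n) :
    ∃ l, P.lower = Step.E :: l := by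
  have hle := (forall_colHeight_le_iff P.upperE P.lowerE).1 P.above 1
  have hne := (pathPts_inter_pathPts_eq_iff P.upperE P.upperN P.lowerE P.lowerN).1 P.meet 1
    one_pos (by lia)
  have hE := P.lowerE
  rcases hl : P.lower with _ | ⟨_ | _, l⟩
  · rw [hl] at hE
    exact absurd hE hm.ne
  · exact ⟨l, rfl⟩
  · rw [hl] at hle hne
    exact absurd (Nat.le_zero.1 (by simpa using hle)) (by simpa using hne)

theorem Polyomino.lower_eq_cons_tail {m n : ℕ} (P : Polyomino m n) (hm : 0 < m) (hn : 0 < n) :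
    P.lower = Step.E :: P.lower.tail := by
  obtain ⟨l, hl⟩ := P.exists_lower_eq_cons hm hn
  rw [hl, List.tail_cons]

theorem Polyomino.leads {m n : ℕ} (P : Polyomino m n) (hm : 0 < m) (hn : 0 < n) :
    Leads Step.E 1 P.upper P.lower.tail := by
  have hE := P.lowerE
  have hN := P.lowerN
  have hpair := And.intro P.above P.meet
  rw [P.lower_eq_cons_tail hm hn] at hE hN hpair
  exact (above_and_meet_iff P.upperE P.upperN hE hN).1 hpair

theorem Polyomino.mem_leadPairs {r s : ℕ} (P : Polyomino (r + 1) s) (hs : 0 < s) :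
    (P.upper, P.lower.tail) ∈ leadPairs Step.E 1 r s := by
  have hlead := P.leads r.succ_pos hs
  have hE := hlead.count_eq.symm.trans P.upperE
  exact QtN.mem_leadPairs.2 ⟨hlead, by lia, hlead.count_swap_eq.symm.trans P.upperN⟩

theorem Polyomino.bijOn_leadPairs {r s : ℕ} (hs : 0 < s) :
    Set.BijOn (fun P : Polyomino (r + 1) s ↦ (P.upper, P.lower.tail)) Set.univ
      (leadPairs Step.E 1 r s) := by
  refine ⟨fun P _ ↦ P.mem_leadPairs hs, fun P _ Q _ h ↦ ?_, fun ⟨u, l⟩ h ↦ ?_⟩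
  · obtain ⟨hupper, htail⟩ := Prod.mk.inj h
    have hlower : P.lower = Q.lower := by
      rw [P.lower_eq_cons_tail r.succ_pos hs, Q.lower_eq_cons_tail r.succ_pos hs, htail]
    cases P
    cases Q
    subst hupper hlower
    rfl
  · obtain ⟨hlead, rfl, rfl⟩ := QtN.mem_leadPairs.1 h
    have hE : u.count Step.E = l.count Step.E + 1 := hlead.count_eq.trans (Nat.add_comm _ _)
    have hE' : (Step.E :: l).count Step.E = l.count Step.E + 1 := List.count_cons_self
    have hN' : (Step.E :: l).count Step.N = l.count Step.N := List.count_cons_of_ne (by decide)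
    obtain ⟨habove, hmeet⟩ := (above_and_meet_iff hE hlead.count_swap_eq hE' hN').2 hlead
    exact ⟨⟨Step.E :: l, u, hE', hN', hE, hlead.count_swap_eq, habove, hmeet⟩, trivial, rfl⟩

theorem Polyomino.area_eq {m n : ℕ} (P : Polyomino m n) (hm : 0 < m) (hn : 0 < n) :
    area P = areaExcess Step.E P.upper P.lower.tail := by
  have hlength := count_add_count_swap Step.E P.lower
  have hE : P.lower.count Step.E = m := P.lowerE
  have hN : P.lower.count Step.N = n := P.lowerN
  have hsumU := sum_colHeight P.upper
  have hsumL := sum_colHeight P.lower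
  obtain ⟨l, hl⟩ := P.exists_lower_eq_cons hm hn
  rw [Step.swap_E, hE, hN, hl, List.length_cons] at hlength
  rw [area, Finset.sum_tsub_distrib _ fun i hi ↦ P.above i (Finset.mem_range.1 hi)]
  rw [show P.upper.count Step.E = m from P.upperE] at hsumU
  rw [hE] at hsumL
  rw [hsumU, hsumL, hl, List.tail_cons, hlength, areaExcess, inversions,
    if_pos rfl, Nat.zero_add, Nat.add_sub_cancel, Nat.sub_sub]

theorem Polyomino.bounce_eq {m n : ℕ} (P : Polyomino m n) (hm : 0 < m) (hn : 0 < n) :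
    bounce P = bounceSum Step.E 1 0 P.upper P.lower.tail := by
  have hlength := count_add_count_swap Step.E P.lower
  have hE : P.lower.count Step.E = m := P.lowerE
  have hN : P.lower.count Step.N = n := P.lowerN
  rw [Step.swap_E, hE, hN, P.lower_eq_cons_tail hm hn, List.length_cons] at hlength
  have haux := bounceAux_eq (U := P.upper) (U₀ := []) (L₀ := [Step.E])
    (P.leads hm hn) rfl
    (P.lower_eq_cons_tail hm hn) rfl rfl (fuel := m + n + 2) (by lia) 0
  rw [hE, hN] at haux
  exact (congrArg (· - (m + n - 1)) haux).trans (by lia)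

theorem card_polyomino {r s : ℕ} (hs : 0 < s) (u v : ℕ) :
    Nat.card {P : Polyomino (r + 1) s // area P = u ∧ bounce P = v} = leadCount r s u v :=
  card_eq_leadCount (Polyomino.bijOn_leadPairs hs) _ _ (fun P ↦ (P.area_eq r.succ_pos hs).symm)
    (fun P ↦ (P.bounce_eq r.succ_pos hs).symm) u v

/-! ### Greedily selected arcs -/

theorem greedyArcs_append_of_le {A B : List (ℕ × ℕ)} {r : ℕ} (hA : ∀ p ∈ A, p.1 ≤ r) :
    greedyArcs (A ++ B) (some r) = greedyArcs B (some r) := by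
  induction A with
  | nil => rfl
  | cons p A ih =>
    obtain ⟨hp, hA⟩ := List.forall_mem_cons.1 hA
    rw [List.cons_append, greedyArcs, if_neg hp.not_gt, ih hA]

theorem greedyArcs_zip_eq_nil {X : List ℕ} {r : ℕ} (hX : ∀ x ∈ X, x ≤ r) (Y : List ℕ) :
    greedyArcs (X.zip Y) (some r) = [] := by
  have h := greedyArcs_append_of_le (A := X.zip Y) (B := [])
    fun p hp ↦ hX p.1 (List.of_mem_zip (a := p.1) (b := p.2) hp).1
  simpa [greedyArcs] using h

theorem greedyArcs_zip_append_cons {X X' Y Y' : List ℕ} {r x y : ℕ} (hX : ∀ x ∈ X, x ≤ r)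
    (hlength : X.length = Y.length) (hx : r < x) :
    greedyArcs ((X ++ x :: X').zip (Y ++ y :: Y')) (some r) =
      (x, y) :: greedyArcs (X'.zip Y') (some y) := by
  rw [List.zip_append hlength, greedyArcs_append_of_le
    fun p hp ↦ hX p.1 (List.of_mem_zip (a := p.1) (b := p.2) hp).1, List.zip_cons_cons,
    greedyArcs, if_pos hx]

theorem greedyArcs_none {A : List (ℕ × ℕ)} (hA : ∀ p ∈ A, 0 < p.1) :
    greedyArcs A none = greedyArcs A (some 0) := by
  rcases A with _ | ⟨p, A⟩
  · rfl
  · rw [greedyArcs, greedyArcs, if_pos (hA p List.mem_cons_self)]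

theorem colHeightsAux_append (u v : List Step) (h : ℕ) :
    colHeightsAux (u ++ v) h = colHeightsAux u h ++ colHeightsAux v (h + u.count Step.N) := by
  induction u generalizing h with
  | nil => rfl
  | cons x u ih =>
    cases x
    · simp [colHeightsAux, ih]
    · simp only [List.cons_append, colHeightsAux, ih, List.count_cons_self]
      rw [Nat.add_assoc, Nat.add_comm 1]

theorem length_colHeightsAux (u : List Step) (h : ℕ) :
    (colHeightsAux u h).length = u.count Step.E := by
  induction u generalizing h with
  | nil => rfl
  | cons x u ih => cases x <;> simp [colHeightsAux, ih]

theorem le_of_mem_idxsOf {c : Step} {w : List Step} {r i : ℕ} (hi : i ∈ w.idxsOf c (r + 1)) :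
    i ≤ r + w.length := by
  have := List.lt_add_of_mem_idxsOf i hi
  lia

theorem idxsOf_append_N_cons (c : Step) (w₁ w₂ : List Step) (r : ℕ) :
    (w₁ ++ Step.N :: w₂).idxsOf c (r + 1) =
      w₁.idxsOf c (r + 1) ++ (if c = Step.N then [r + w₁.length + 1] else []) ++
        w₂.idxsOf c (r + w₁.length + 1 + 1) := by
  rw [List.idxsOf_append, List.idxsOf_cons, Nat.add_right_comm r 1]
  cases c <;> simp

/-- The right end of the arc of an `E` of the word `u` is the entry of the list `c` indexed by the
number of letters `N` before it. As in `bounceSum_append_cons`, two turns of the bounce path keep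
one arc: the arcs starting at the pending positions `X`, which are at most `r`, are skipped, and
the kept arc ends where the path next meets the word `l`. -/
theorem greedyArcs_turn {h r : ℕ} {X c₀ : List ℕ} {u v l₁ l₂ : List Step}
    (hX : X.length = u.count Step.E) (hXr : ∀ x ∈ X, x ≤ r) (hc₀ : c₀.length = h + 1)
    (hN : u.count Step.N = l₁.count Step.N + 1) {x : ℕ} {X' : List ℕ}
    (hx : l₁.idxsOf Step.E (r + 1) = x :: X') :
    greedyArcs ((X ++ (l₁ ++ Step.N :: l₂).idxsOf Step.E (r + 1)).zip
      ((colHeightsAux (u ++ Step.E :: v) h).map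
        ((c₀ ++ (l₁ ++ Step.N :: l₂).idxsOf Step.N (r + 1)).getD · 0))) (some r) =
      (x, r + l₁.length + 1) ::
        greedyArcs ((X' ++ l₂.idxsOf Step.E (r + l₁.length + 1 + 1)).zip
          ((colHeightsAux v (h + u.count Step.N)).map
            (((c₀ ++ l₁.idxsOf Step.N (r + 1) ++ [r + l₁.length + 1]) ++
              l₂.idxsOf Step.N (r + l₁.length + 1 + 1)).getD · 0))) (some (r + l₁.length + 1)) := by
  have hrx : r < x := List.ge_of_mem_idxsOf x (hx ▸ List.mem_cons_self)
  have hget : (c₀ ++ l₁.idxsOf Step.N (r + 1) ++ [r + l₁.length + 1] ++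
      l₂.idxsOf Step.N (r + l₁.length + 1 + 1)).getD (h + u.count Step.N) 0 =
        r + l₁.length + 1 := by
    rw [List.append_assoc, List.getD_append_right _ _ _ _ (by simp; lia)]
    simp [hc₀, hN, show h + (l₁.count Step.N + 1) - (h + 1 + l₁.count Step.N) = 0 by lia]
  rw [idxsOf_append_N_cons, idxsOf_append_N_cons, if_neg (by decide), if_pos rfl, hx,
    List.append_nil, List.cons_append, colHeightsAux_append, colHeightsAux, List.map_append,
    List.map_cons, ← List.append_assoc c₀, ← List.append_assoc c₀, hget,
    greedyArcs_zip_append_cons hXr (by rw [hX, List.length_map, length_colHeightsAux]) hrx]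

theorem Leads.count_eq_zero_or_exists_eq_append {c : Step} {a : ℕ} {u l : List Step}
    (h : Leads c (a + 1) (u ++ [c]) l) : u.count c = a ∧ l.count c = 0 ∨
      ∃ u₁ u₂ l₁ l₂, u = u₁ ++ c :: u₂ ∧ u₁.count c = a ∧ l = l₁ ++ c.swap :: l₂ ∧
        u₁.count c.swap = l₁.count c.swap + 1 ∧ 0 < l₁.count c ∧
          Leads c (l₁.count c) (u₂ ++ [c]) l₂ := by
  obtain ⟨u₁, u', hu, rfl⟩ := h.exists_eq_append_cons
  have hnext := leads_append_cons_iff.1 (hu ▸ h)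
  rcases List.eq_nil_or_concat' u' with rfl | ⟨u₂, x, rfl⟩
  · rw [(List.append_inj' hu rfl).1]
    exact Or.inl ⟨rfl, by simpa using hnext.count_swap_eq⟩
  rw [← List.cons_append, ← List.append_assoc] at hu
  obtain ⟨rfl, hx⟩ := List.append_inj' hu rfl
  obtain rfl := List.head_eq_of_cons_eq hx
  have hne : u₂ ++ [c] ≠ [] := List.append_ne_nil_of_right_ne_nil u₂ (List.cons_ne_nil _ _)
  obtain ⟨b, hb⟩ := Nat.exists_eq_succ_of_ne_zero (n := u₁.count c.swap)
    fun hb ↦ hne (leads_zero.1 (hb ▸ hnext)).2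
  rw [hb] at hnext
  obtain ⟨l₁, l₂, rfl, rfl⟩ := hnext.exists_eq_append_cons
  have hrest := leads_append_cons_iff.1 hnext
  rw [Step.swap_swap] at hrest
  have hpos : 0 < l₁.count c :=
    Nat.pos_of_ne_zero fun hzero ↦ hne (leads_zero.1 (hzero ▸ hrest)).1
  exact Or.inr ⟨u₁, u₂, l₁, l₂, rfl, rfl, rfl, hb, hpos, hrest⟩

theorem sum_greedyArcs_eq_bounceSum {a h r : ℕ} {X c₀ : List ℕ} {u l : List Step}
    (hlead : Leads Step.E (a + 1) (u ++ [Step.E]) l) (hX : X.length = a) (hXr : ∀ x ∈ X, x ≤ r)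
    (hc₀ : c₀.length = h + 1) :
    ((greedyArcs ((X ++ l.idxsOf Step.E (r + 1)).zip
      ((colHeightsAux u h).map ((c₀ ++ l.idxsOf Step.N (r + 1)).getD · 0))) (some r)).map
        (fun p ↦ r + l.length - p.2)).sum = bounceSum Step.E (a + 1) 0 (u ++ [Step.E]) l := by
  induction hm : l.length using Nat.strong_induction_on generalizing a h r X c₀ u l with | _ m ih
  rw [← hm]
  rcases hlead.count_eq_zero_or_exists_eq_append with
    ⟨rfl, hl⟩ | ⟨u₁, v, l₁, l₂, rfl, rfl, rfl, hN, hpos, hrest⟩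
  · have hE : l.idxsOf Step.E (r + 1) = [] := by
      rw [← List.length_eq_zero_iff, List.length_idxsOf, hl]
    rw [hE, List.append_nil, greedyArcs_zip_eq_nil hXr,
      (leads_append_cons_iff.1 hlead).bounceSum_append_cons, if_neg (by decide),
      bounceSum_nil_right]
    rfl
  rw [Step.swap_E] at hm hN hlead ⊢
  rw [List.append_assoc, List.cons_append] at hlead ⊢
  have hnext := leads_append_cons_iff.1 hlead
  rw [hnext.bounceSum_append_cons, if_neg (by decide), Nat.zero_add]
  rw [Step.swap_E, hN] at hnext ⊢
  rw [(leads_append_cons_iff.1 hnext).bounceSum_append_cons, if_pos rfl, Step.swap_N]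
  have hlength : (l₁.idxsOf Step.E (r + 1)).length = l₁.count Step.E := List.length_idxsOf
  obtain ⟨x, X', hx⟩ := List.exists_cons_of_length_pos (hpos.trans_eq hlength.symm)
  rw [hx, List.length_cons] at hlength
  rw [← hlength] at hrest ⊢
  have hX' (y : ℕ) (hy : y ∈ X') : y ≤ r + l₁.length + 1 :=
    (le_of_mem_idxsOf (hx ▸ List.mem_cons_of_mem x hy)).trans (Nat.le_succ _)
  have hc₀' : (c₀ ++ l₁.idxsOf Step.N (r + 1) ++ [r + l₁.length + 1]).length =
      h + u₁.count Step.N + 1 := by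
    simp only [List.length_append, List.length_idxsOf, List.length_singleton]
    lia
  rw [greedyArcs_turn hX hXr hc₀ hN hx, List.map_cons, List.sum_cons,
    ← ih _ (by rw [← hm, List.length_append, List.length_cons]; lia) hrest rfl hX' hc₀' rfl]
  have hend : r + (l₁ ++ Step.N :: l₂).length = r + l₁.length + 1 + l₂.length := by
    rw [List.length_append, List.length_cons]
    lia
  rw [hend, Nat.add_sub_cancel_left]

theorem repeatEach_zip_gaps {C : List ℕ} {h m r : ℕ} {w : List Step} (hmr : m ≤ r)
    (hC : h + w.count Step.N < C.length) :
    repeatEach ((C.drop h).zip (List.zipWith (fun a b ↦ b - a - 1)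
      (m :: (w.idxsOf Step.N (r + 1) ++ [r + w.length + 1]))
      (w.idxsOf Step.N (r + 1) ++ [r + w.length + 1]))) =
        List.replicate (r - m) (C.getD h 0) ++ (colHeightsAux w h).map (C.getD · 0) := by
  induction w generalizing h m r with
  | nil =>
    rw [List.drop_eq_getElem_cons (by simpa using hC), List.getD_eq_getElem _ _ (by simpa using hC)]
    simp only [List.idxsOf_nil, List.nil_append, List.length_nil, Nat.add_zero, colHeightsAux,
      List.zipWith_cons_cons, List.zipWith_nil_right, List.zip_cons_cons, List.zip_nil_right,
      repeatEach, List.map_nil]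
    congr 2
    lia
  | cons x w ih =>
    rw [List.length_cons, show r + (w.length + 1) + 1 = r + 1 + w.length + 1 by lia]
    cases x
    · have := ih (h := h) (m := m) (r := r + 1) (by lia) (by simpa using hC)
      simpa [List.idxsOf_cons, colHeightsAux, Nat.succ_sub hmr, List.replicate_succ'] using this
    · rw [List.count_cons_self] at hC
      have := ih (h := h + 1) (m := r + 1) (r := r + 1) le_rfl (by lia)
      rw [List.drop_eq_getElem_cons (by lia), List.getD_eq_getElem _ _ (by lia)]
      simp only [List.idxsOf_cons, beq_self_eq_true, if_true, List.cons_append,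
        List.zipWith_cons_cons, List.zip_cons_cons, repeatEach, colHeightsAux, this]
      simp [show r + 1 - m - 1 = r - m by lia]

theorem nuList_eq_zipWith (n : ℕ) (bs : Finset (Finset ℕ)) :
    nuList n bs = List.zipWith (fun a b ↦ b - a - 1)
      ((bs.image fmin).sort (· ≤ ·) ++ [n + 1])
      ((bs.image fmin).sort (· ≤ ·) ++ [n + 1]).tail := by
  refine List.ext_getElem (by simp [nuList]) fun i hi hi' ↦ ?_
  simp only [nuList, List.length_map, List.length_range] at hi
  have hlength : ((bs.image fmin).sort (· ≤ ·) ++ [n + 1]).length = (bs.image fmin).card + 1 := by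
    simp
  simp only [nuList, List.getElem_map, List.getElem_range, List.getElem_zipWith, List.getElem_tail]
  rw [List.getD_eq_getElem _ _ (by lia), List.getD_eq_getElem _ _ (by lia)]

/-! ### Sets as words -/

section SetWords

open scoped Finset

theorem zero_notMem_of_subset_Icc_one {S : Finset ℕ} {n : ℕ} (hS : S ⊆ Finset.Icc 1 n) : 0 ∉ S :=
  fun h ↦ absurd (Finset.mem_Icc.1 (hS h)).1 (Nat.not_succ_le_zero 0)

theorem sum_filter_le_succ {M : Type*} [AddCommMonoid M] (S : Finset ℕ) (f : ℕ → M) (n : ℕ) :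
    ∑ x ∈ S with x ≤ n + 1, f x =
      ∑ x ∈ S with x ≤ n, f x + if n + 1 ∈ S then f (n + 1) else 0 := by
  have hdisjoint : Disjoint {x ∈ S | x ≤ n} {x ∈ S | x = n + 1} :=
    Finset.disjoint_filter.2 fun x _ hx ↦ (Nat.lt_succ_of_le hx).ne
  simp only [Nat.le_add_one_iff]
  rw [Finset.filter_or, Finset.sum_union hdisjoint, Finset.filter_eq']
  split_ifs <;> simp

theorem card_filter_le_succ (S : Finset ℕ) (n : ℕ) :
    #{x ∈ S | x ≤ n + 1} = #{x ∈ S | x ≤ n} + if n + 1 ∈ S then 1 else 0 := by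
  simpa only [Finset.card_eq_sum_ones] using sum_filter_le_succ S (fun _ ↦ 1) n

/-- The indicator word of the set `S` in `1, …, n`: its letters `N` are at the elements of `S`. -/
def stepWord (S : Finset ℕ) (n : ℕ) : List Step :=
  (List.range' 1 n).map fun i ↦ if i ∈ S then Step.N else Step.E

theorem stepWord_succ (S : Finset ℕ) (n : ℕ) :
    stepWord S (n + 1) = stepWord S n ++ [if n + 1 ∈ S then Step.N else Step.E] := by
  rw [stepWord, List.range'_1_concat, List.map_append, List.map_singleton, Nat.add_comm 1, stepWord]

theorem exists_stepWord_eq_cons {S : Finset ℕ} {n : ℕ} (hS : 1 ∈ S) (hn : 0 < n) :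
    ∃ w, stepWord S n = Step.N :: w := by
  obtain ⟨n, rfl⟩ := Nat.exists_eq_succ_of_ne_zero hn.ne'
  exact ⟨_, by rw [stepWord, List.range'_succ, List.map_cons, if_pos hS]⟩

@[simp]
theorem length_stepWord (S : Finset ℕ) (n : ℕ) : (stepWord S n).length = n := by
  rw [stepWord, List.length_map, List.length_range']

theorem take_stepWord (S : Finset ℕ) {i n : ℕ} (h : i ≤ n) :
    (stepWord S n).take i = stepWord S i := by
  rw [stepWord, ← List.map_take, List.take_range'_of_length_ge h, stepWord]

theorem count_N_stepWord {S : Finset ℕ} (hS : 0 ∉ S) (n : ℕ) :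
    (stepWord S n).count Step.N = #{x ∈ S | x ≤ n} := by
  induction n with
  | zero => simp [stepWord, Finset.filter_eq', hS]
  | succ n ih =>
    rw [stepWord_succ, List.count_append, ih, card_filter_le_succ]
    split_ifs <;> rfl

theorem count_E_add_card_filter_le {S : Finset ℕ} (hS : 0 ∉ S) (n : ℕ) :
    (stepWord S n).count Step.E + #{x ∈ S | x ≤ n} = n := by
  rw [← count_N_stepWord hS, ← Step.swap_E, count_add_count_swap, length_stepWord]

theorem count_N_stepWord_of_subset {S : Finset ℕ} {n : ℕ} (hS : S ⊆ Finset.Icc 1 n) :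
    (stepWord S n).count Step.N = #S := by
  rw [count_N_stepWord (zero_notMem_of_subset_Icc_one hS),
    Finset.filter_true_of_mem fun x hx ↦ (Finset.mem_Icc.1 (hS hx)).2]

theorem mem_idxsOf_stepWord {S : Finset ℕ} {n i : ℕ} {c : Step} :
    i ∈ (stepWord S n).idxsOf c 1 ↔
      i ∈ Finset.Icc 1 n ∧ (if i ∈ S then Step.N else Step.E) = c := by
  simp only [List.mem_idxsOf_iff_getElem_sub_pos, stepWord, List.length_map, List.length_range',
    List.getElem_map, List.getElem_range', beq_iff_eq, exists_prop, Finset.mem_Icc, and_assoc]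
  refine and_congr_right fun hi ↦ ?_
  rw [one_mul, Nat.add_sub_cancel' hi]
  exact and_congr_left' (by lia)

theorem sort_eq_idxsOf {S T : Finset ℕ} {n : ℕ} {c : Step}
    (hT : ∀ i, i ∈ T ↔ i ∈ Finset.Icc 1 n ∧ (if i ∈ S then Step.N else Step.E) = c) :
    T.sort (· ≤ ·) = (stepWord S n).idxsOf c 1 := by
  obtain rfl : T = ((stepWord S n).idxsOf c 1).toFinset := by
    ext i
    rw [List.mem_toFinset, mem_idxsOf_stepWord, hT]
  exact (List.toFinset_sort _ (List.pairwise_idxsOf.imp ne_of_lt)).2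
    (List.pairwise_idxsOf.imp le_of_lt)

theorem sort_eq_idxsOf_N {S : Finset ℕ} {n : ℕ} (hS : S ⊆ Finset.Icc 1 n) :
    S.sort (· ≤ ·) = (stepWord S n).idxsOf Step.N 1 :=
  sort_eq_idxsOf fun i ↦ by simpa using @hS i

theorem sort_filter_notMem_eq_idxsOf_E (S : Finset ℕ) (n : ℕ) :
    ({i ∈ Finset.Icc 1 n | i ∉ S} : Finset ℕ).sort (· ≤ ·) = (stepWord S n).idxsOf Step.E 1 :=
  sort_eq_idxsOf fun i ↦ by simp

theorem stepWord_injOn (n : ℕ) : Set.InjOn (stepWord · n) {S | S ⊆ Finset.Icc 1 n} := by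
  intro S hS T hT h
  rw [← Finset.sort_toFinset S (· ≤ ·), sort_eq_idxsOf_N hS, ← Finset.sort_toFinset T (· ≤ ·),
    sort_eq_idxsOf_N hT]
  exact congrArg (fun w ↦ (w.idxsOf Step.N 1).toFinset) h

theorem exists_stepWord_eq {n : ℕ} {w : List Step} (hw : w.length = n) :
    ∃ S ⊆ Finset.Icc 1 n, stepWord S n = w := by
  subst hw
  have hmem (i : ℕ) := List.mem_idxsOf_iff_getElem_sub_pos (xs := w) (x := Step.N) (s := 1) (i := i)
  refine ⟨(w.idxsOf Step.N 1).toFinset, fun i hi ↦ ?_,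
    List.ext_getElem (length_stepWord _ _) fun i hi hi' ↦ ?_⟩
  · have := (hmem i).1 (List.mem_toFinset.1 hi)
    exact Finset.mem_Icc.2 (by lia)
  · simp only [stepWord, List.getElem_map, List.getElem_range', List.mem_toFinset, hmem]
    cases h : w[i] <;> simp [h, hi']

theorem inversions_stepWord {S : Finset ℕ} (hS : 0 ∉ S) (n : ℕ) :
    inversions Step.E (stepWord S n) + ∑ j ∈ Finset.range #{x ∈ S | x ≤ n}, j +
      ∑ x ∈ S with x ≤ n, x = #{x ∈ S | x ≤ n} * n := by
  induction n with
  | zero => simp [stepWord, inversions, Finset.filter_eq', hS]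
  | succ n ih =>
    have hletter (x : Step) : inversions Step.E [x] = 0 := by simp [inversions]
    rw [stepWord_succ, inversions_append, hletter, Step.swap_E, count_N_stepWord hS,
      card_filter_le_succ, sum_filter_le_succ]
    split_ifs
    · rw [Finset.sum_range_succ, List.count_singleton, if_neg (by decide)]
      linarith
    · simp only [List.count_singleton_self, Nat.add_zero]
      linarith

end SetWords

/-! ### Block minima and block maxima -/

section Blocks

open scoped Finset

theorem fmin_mem {β : Finset ℕ} (h : β.Nonempty) : fmin β ∈ β := by
  rw [fmin, dif_pos h]
  exact β.min'_mem h

theorem fmin_le {β : Finset ℕ} {x : ℕ} (hx : x ∈ β) : fmin β ≤ x := by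
  rw [fmin, dif_pos ⟨x, hx⟩]
  exact β.min'_le x hx

theorem le_fmax {β : Finset ℕ} {x : ℕ} (hx : x ∈ β) : x ≤ fmax β :=
  Finset.le_sup (f := id) hx

theorem fmax_mem {β : Finset ℕ} (h : β.Nonempty) : fmax β ∈ β := by
  obtain ⟨x, hx, hmax⟩ := Finset.exists_mem_eq_sup β h id
  rw [fmax, hmax]
  exact hx

theorem fmin_eq {β : Finset ℕ} {x : ℕ} (hx : x ∈ β) (hle : ∀ y ∈ β, x ≤ y) : fmin β = x :=
  le_antisymm (fmin_le hx) (hle _ (fmin_mem ⟨x, hx⟩))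

theorem fmax_eq {β : Finset ℕ} {x : ℕ} (hx : x ∈ β) (hle : ∀ y ∈ β, y ≤ x) : fmax β = x :=
  le_antisymm (hle _ (fmax_mem ⟨x, hx⟩)) (le_fmax hx)

/-- The number of blocks having begun by `i` but not ended before `i`, in a partition with set of
block minima `M` and set of block maxima `C`. -/
def depth (M C : Finset ℕ) (i : ℕ) : ℤ :=
  (#{m ∈ M | m ≤ i} : ℤ) - #{c ∈ C | c < i}

theorem leads_stepWord_iff {M C : Finset ℕ} {n : ℕ} (hM : M ⊆ Finset.Icc 1 n)
    (hC : C ⊆ Finset.Icc 1 n) :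
    Leads Step.E 1 (stepWord M n ++ [Step.E]) (stepWord C n) ↔
      #M = #C ∧ ∀ i ∈ Finset.Icc 1 n, 0 < depth M C i := by
  have hN := count_N_stepWord_of_subset hM
  have hN' := count_N_stepWord_of_subset hC
  have hcountM := count_E_add_card_filter_le (zero_notMem_of_subset_Icc_one hM)
  have hcountC := count_E_add_card_filter_le (zero_notMem_of_subset_Icc_one hC)
  have hE := count_add_count_swap Step.E (stepWord M n)
  have hE' := count_add_count_swap Step.E (stepWord C n)
  have htake (i : ℕ) (hi : i < n) : ((stepWord M n ++ [Step.E]).take (1 + i)).count Step.E <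
      1 + ((stepWord C n).take i).count Step.E ↔ 0 < depth M C (i + 1) := by
    rw [List.take_append_of_le_length (by rw [length_stepWord]; lia), take_stepWord M (by lia),
      take_stepWord C hi.le, depth, Nat.add_comm 1 i]
    simp only [Nat.lt_succ_iff]
    have := hcountM (i + 1)
    have := hcountC i
    lia
  simp only [Step.swap_E, length_stepWord] at hE hE'
  constructor
  · intro h
    have := h.count_swap_eq
    rw [Step.swap_E, List.count_append, hN, hN', List.count_singleton] at this
    refine ⟨this, fun i hi ↦ ?_⟩
    obtain ⟨hi₁, hin⟩ := Finset.mem_Icc.1 hi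
    obtain ⟨i, rfl⟩ := Nat.exists_eq_succ_of_ne_zero (Nat.one_le_iff_ne_zero.1 hi₁)
    exact (htake i hin).1 (h.count_take_lt i (by rwa [length_stepWord]))
  · rintro ⟨hcard, hdepth⟩
    refine ⟨?_, ?_, fun i hi ↦ ?_⟩
    · rw [List.count_append, List.count_singleton_self]
      lia
    · rw [Step.swap_E, List.count_append, List.count_singleton, hN, hN', hcard]
      rfl
    · rw [length_stepWord] at hi
      exact (htake i hi).2 (hdepth _ (Finset.mem_Icc.2 ⟨by lia, hi⟩))

namespace SetPartition

variable {n : ℕ} (P : SetPartition n) {β γ : Finset ℕ}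

theorem nonempty_of_mem (hβ : β ∈ P.blocks) : β.Nonempty :=
  Finset.nonempty_iff_ne_empty.2 fun h ↦ P.not_empty_mem (h ▸ hβ)

theorem eq_of_mem (hβ : β ∈ P.blocks) (hγ : γ ∈ P.blocks) {x : ℕ} (hxβ : x ∈ β) (hxγ : x ∈ γ) :
    β = γ := by
  by_contra hne
  exact Finset.disjoint_left.1 (P.disjoint β hβ γ hγ hne) hxβ hxγ

theorem fmin_mem (hβ : β ∈ P.blocks) : fmin β ∈ β :=
  QtN.fmin_mem (P.nonempty_of_mem hβ)

theorem fmax_mem (hβ : β ∈ P.blocks) : fmax β ∈ β :=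
  QtN.fmax_mem (P.nonempty_of_mem hβ)

theorem injOn_of_forall_mem {P : SetPartition n} {g : Finset ℕ → ℕ}
    (hg : ∀ β ∈ P.blocks, g β ∈ β) : Set.InjOn g P.blocks := by
  intro β hβ γ hγ h
  exact P.eq_of_mem hβ hγ (hg β hβ) (h ▸ hg γ hγ)

theorem injOn_fmin : Set.InjOn fmin P.blocks := injOn_of_forall_mem fun _ ↦ P.fmin_mem

theorem injOn_fmax : Set.InjOn fmax P.blocks := injOn_of_forall_mem fun _ ↦ P.fmax_mem

theorem image_subset_Icc {P : SetPartition n} {g : Finset ℕ → ℕ}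
    (hg : ∀ β ∈ P.blocks, g β ∈ β) : P.blocks.image g ⊆ Finset.Icc 1 n := by
  intro x hx
  obtain ⟨β, hβ, rfl⟩ := Finset.mem_image.1 hx
  exact (P.cover _).2 ⟨β, hβ, hg β hβ⟩

theorem image_fmin_subset_Icc : P.blocks.image fmin ⊆ Finset.Icc 1 n :=
  image_subset_Icc fun _ ↦ P.fmin_mem

theorem image_fmax_subset_Icc : P.blocks.image fmax ⊆ Finset.Icc 1 n :=
  image_subset_Icc fun _ ↦ P.fmax_mem

theorem depth_image (i : ℕ) : depth (P.blocks.image fmin) (P.blocks.image fmax) i =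
    #{β ∈ P.blocks | fmin β ≤ i ∧ i ≤ fmax β} := by
  rw [depth, Finset.filter_image, Finset.filter_image,
    Finset.card_image_of_injOn (P.injOn_fmin.mono (Finset.filter_subset _ _)),
    Finset.card_image_of_injOn (P.injOn_fmax.mono (Finset.filter_subset _ _)), sub_eq_iff_eq_add,
    ← Nat.cast_add, Nat.cast_inj, ← Finset.card_filter_add_card_filter_not (fun β ↦ i ≤ fmax β),
    Finset.filter_filter, Finset.filter_filter]
  congr 2
  refine Finset.filter_congr fun β hβ ↦ ?_
  have := le_fmax (P.fmin_mem hβ)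
  lia

theorem leads_stepWord : Leads Step.E 1 (stepWord (P.blocks.image fmin) n ++ [Step.E])
    (stepWord (P.blocks.image fmax) n) := by
  refine (leads_stepWord_iff P.image_fmin_subset_Icc P.image_fmax_subset_Icc).2 ⟨?_, fun i hi ↦ ?_⟩
  · rw [Finset.card_image_of_injOn P.injOn_fmin,
      Finset.card_image_of_injOn P.injOn_fmax]
  · obtain ⟨β, hβ, hiβ⟩ := (P.cover i).1 hi
    rw [depth_image, Nat.cast_pos, Finset.card_pos]
    exact ⟨β, Finset.mem_filter.2 ⟨hβ, fmin_le hiβ, le_fmax hiβ⟩⟩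

theorem sum_card : ∑ β ∈ P.blocks, #β = n := by
  have hcover : P.blocks.biUnion id = Finset.Icc 1 n := by
    ext i
    rw [P.cover, Finset.mem_biUnion]
    rfl
  calc ∑ β ∈ P.blocks, #β = #(P.blocks.biUnion id) := (Finset.card_biUnion P.disjoint).symm
    _ = n := by rw [hcover, Nat.card_Icc, Nat.add_sub_cancel]

theorem skip_add (P : SetPartition n) :
    skip P.blocks + n + ∑ x ∈ P.blocks.image fmin, x =
      ∑ x ∈ P.blocks.image fmax, x + #P.blocks := by
  have hblock (β) (hβ : β ∈ P.blocks) :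
      fmax β + 1 - fmin β - #β + #β + fmin β = fmax β + 1 := by
    have hmin := fmin_le (P.fmax_mem hβ)
    have hcard : #β ≤ fmax β + 1 - fmin β := by
      rw [← Nat.card_Icc]
      exact Finset.card_le_card fun x hx ↦ Finset.mem_Icc.2 ⟨fmin_le hx, le_fmax hx⟩
    lia
  calc skip P.blocks + n + ∑ x ∈ P.blocks.image fmin, x
      = ∑ β ∈ P.blocks, (fmax β + 1 - fmin β - #β + #β + fmin β) := by
        rw [Finset.sum_add_distrib, Finset.sum_add_distrib, P.sum_card,
          Finset.sum_image P.injOn_fmin, skip]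
    _ = ∑ β ∈ P.blocks, (fmax β + 1) := Finset.sum_congr rfl hblock
    _ = ∑ x ∈ P.blocks.image fmax, x + #P.blocks := by
        rw [Finset.sum_add_distrib, Finset.sum_image P.injOn_fmax, Finset.card_eq_sum_ones]

theorem areaExcess_stepWord : areaExcess Step.E (stepWord (P.blocks.image fmin) n ++ [Step.E])
    (stepWord (P.blocks.image fmax) n) = skip P.blocks := by
  have hmin := inversions_stepWord (zero_notMem_of_subset_Icc_one P.image_fmin_subset_Icc) n
  have hmax := inversions_stepWord (zero_notMem_of_subset_Icc_one P.image_fmax_subset_Icc) n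
  rw [Finset.filter_true_of_mem fun x hx ↦ (Finset.mem_Icc.1 (P.image_fmin_subset_Icc hx)).2,
    Finset.card_image_of_injOn P.injOn_fmin] at hmin
  rw [Finset.filter_true_of_mem fun x hx ↦ (Finset.mem_Icc.1 (P.image_fmax_subset_Icc hx)).2,
    Finset.card_image_of_injOn P.injOn_fmax] at hmax
  have hletter : inversions Step.E [Step.E] = 0 := rfl
  have hcount := count_N_stepWord_of_subset P.image_fmin_subset_Icc
  rw [Finset.card_image_of_injOn P.injOn_fmin] at hcount
  rw [areaExcess, inversions_append, hletter, List.count_singleton_self, Step.swap_E, hcount,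
    length_stepWord]
  have := P.skip_add
  lia

theorem one_mem_image_fmin (hn : 0 < n) : 1 ∈ P.blocks.image fmin := by
  have h1 : 1 ∈ Finset.Icc 1 n := Finset.mem_Icc.2 ⟨le_rfl, hn⟩
  obtain ⟨β, hβ, h1β⟩ := (P.cover 1).1 h1
  have hle (x) (hx : x ∈ β) : 1 ≤ x := (Finset.mem_Icc.1 ((P.cover x).2 ⟨β, hβ, hx⟩)).1
  exact Finset.mem_image.2 ⟨β, hβ, fmin_eq h1β hle⟩

theorem ysList_eq (hn : 0 < n) : ysList n P.blocks =
    (colHeightsAux (stepWord (P.blocks.image fmin) n) 0).map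
      ((0 :: (stepWord (P.blocks.image fmax) n).idxsOf Step.N 1).getD · 0) := by
  obtain ⟨w, hw⟩ := exists_stepWord_eq_cons (P.one_mem_image_fmin hn) hn
  have hlength : 1 + w.length = n := by
    rw [← length_stepWord (P.blocks.image fmin) n, hw, List.length_cons, Nat.add_comm]
  have hcount : 1 + w.count Step.N =
      ((stepWord (P.blocks.image fmax) n).idxsOf Step.N 1).length := by
    rw [List.length_idxsOf, ← Step.swap_E, ← P.leads_stepWord.count_swap_eq, hw]
    simp [Nat.add_comm]
  have hgaps := repeatEach_zip_gaps (C := 0 :: (stepWord (P.blocks.image fmax) n).idxsOf Step.N 1)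
    (r := 1) le_rfl (by rw [List.length_cons, ← hcount]; exact Nat.lt_succ_self _)
  rw [hlength, List.drop_one, List.tail_cons, Nat.sub_self, List.replicate_zero,
    List.nil_append] at hgaps
  rw [ysList, nuList_eq_zipWith, sort_eq_idxsOf_N P.image_fmin_subset_Icc,
    sort_eq_idxsOf_N P.image_fmax_subset_Icc, hw, List.idxsOf_cons, beq_self_eq_true,
    if_pos rfl, colHeightsAux]
  exact hgaps

theorem bounceSum_stepWord (hn : 0 < n) :
    bounceSum Step.E 1 0 (stepWord (P.blocks.image fmin) n ++ [Step.E])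
      (stepWord (P.blocks.image fmax) n) = mingarc n P.blocks := by
  have hpos (p) (hp : p ∈ (xsList n P.blocks).zip (ysList n P.blocks)) : 0 < p.1 := by
    have hx : p.1 ∈ xsList n P.blocks := (List.of_mem_zip (a := p.1) (b := p.2) hp).1
    rw [xsList, Finset.mem_sort, Finset.mem_filter, Finset.mem_Icc] at hx
    exact hx.1.1
  have hsum := sum_greedyArcs_eq_bounceSum (X := []) (c₀ := [0]) (h := 0) (r := 0)
    P.leads_stepWord rfl (by simp) rfl
  rw [mingarc, greedyArcs_none hpos, P.ysList_eq hn, xsList, sort_filter_notMem_eq_idxsOf_E, ← hsum]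
  simp

end SetPartition

end Blocks

/-! ### Noncrossing partitions with prescribed block minima and block maxima -/

section Noncrossing

open scoped Finset

variable {M C : Finset ℕ} {n : ℕ}

theorem depth_succ (M C : Finset ℕ) (i : ℕ) : depth M C (i + 1) =
    depth M C i + (if i + 1 ∈ M then 1 else 0) - (if i ∈ C then 1 else 0) := by
  have hC : #{c ∈ C | c < i + 1} = #{c ∈ C | c < i} + if i ∈ C then 1 else 0 := by
    cases i with
    | zero => simp [Finset.filter_eq', apply_ite]
    | succ i => simpa only [Nat.lt_succ_iff] using card_filter_le_succ C i
  rw [depth, depth, card_filter_le_succ, hC]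
  push_cast
  ring

theorem exists_mem_depth_le {i j : ℕ} {v : ℤ} (hij : i ≤ j) (hi : depth M C i < v)
    (hj : v ≤ depth M C j) : ∃ m ∈ M, i < m ∧ m ≤ j ∧ depth M C m ≤ v := by
  induction j, hij using Nat.le_induction with
  | base => exact absurd hj hi.not_ge
  | succ j hij ih =>
    by_cases hv : v ≤ depth M C j
    · obtain ⟨m, hm, him, hmj, hmv⟩ := ih hv
      exact ⟨m, hm, him, by lia, hmv⟩
    · have hsucc := depth_succ M C j
      have hC : (0 : ℤ) ≤ if j ∈ C then 1 else 0 := by split_ifs <;> decide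
      by_cases hm : j + 1 ∈ M
      · rw [if_pos hm] at hsucc
        exact ⟨j + 1, hm, by lia, le_rfl, by lia⟩
      · rw [if_neg hm] at hsucc
        lia

/-- The last element of `M` up to `i` whose depth is at most that of `i`. If `M` and `C` are the
block minima and block maxima of a noncrossing partition, it is the minimum of the block of `i`. -/
def opener (M C : Finset ℕ) (i : ℕ) : ℕ :=
  fmax {m ∈ M | m ≤ i ∧ depth M C m ≤ depth M C i}

theorem opener_eq {i m : ℕ} (hm : m ∈ M) (hmi : m ≤ i) (hdepth : depth M C m ≤ depth M C i)
    (hlt : ∀ m' ∈ M, m < m' → m' ≤ i → depth M C i < depth M C m') : opener M C i = m := by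
  refine fmax_eq (Finset.mem_filter.2 ⟨hm, hmi, hdepth⟩) fun m' hm' ↦ ?_
  obtain ⟨hm'M, hm'i, hm'depth⟩ := Finset.mem_filter.1 hm'
  by_contra! hmm'
  exact (hlt m' hm'M hmm' hm'i).not_ge hm'depth

theorem opener_of_mem {m : ℕ} (hm : m ∈ M) : opener M C m = m :=
  opener_eq hm le_rfl le_rfl fun _ _ hlt hle ↦ absurd hle hlt.not_ge

theorem le_opener {i m : ℕ} (hm : m ∈ M) (hmi : m ≤ i) (hdepth : depth M C m ≤ depth M C i) :
    m ≤ opener M C i :=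
  le_fmax (Finset.mem_filter.2 ⟨hm, hmi, hdepth⟩)

theorem opener_mem_filter (hM : 0 ∉ M) {i : ℕ} (hi : 0 < depth M C i) :
    opener M C i ∈ {m ∈ M | m ≤ i ∧ depth M C m ≤ depth M C i} := by
  have hzero : depth M C 0 < depth M C i := by
    refine hi.trans_le' ?_
    simp [depth, Finset.filter_eq', hM]
  obtain ⟨m, hm, -, hmi, hdepth⟩ := exists_mem_depth_le (Nat.zero_le i) hzero le_rfl
  exact fmax_mem ⟨m, Finset.mem_filter.2 ⟨hm, hmi, hdepth⟩⟩

theorem opener_mem (hM : 0 ∉ M) {i : ℕ} (hi : 0 < depth M C i) : opener M C i ∈ M :=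
  (Finset.mem_filter.1 (opener_mem_filter hM hi)).1

theorem opener_le (hM : 0 ∉ M) {i : ℕ} (hi : 0 < depth M C i) : opener M C i ≤ i :=
  (Finset.mem_filter.1 (opener_mem_filter hM hi)).2.1

theorem depth_le_of_opener_le {i j : ℕ} (hj : opener M C i ≤ j) (hji : j ≤ i) :
    depth M C i ≤ depth M C j := by
  by_contra! hlt
  obtain ⟨m, hm, hjm, hmi, hdepth⟩ := exists_mem_depth_le hji hlt le_rfl
  exact (hj.trans_lt hjm).not_ge (le_opener hm hmi hdepth)

theorem depth_opener (hM : 0 ∉ M) {i : ℕ} (hi : 0 < depth M C i) :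
    depth M C (opener M C i) = depth M C i :=
  le_antisymm (Finset.mem_filter.1 (opener_mem_filter hM hi)).2.2
    (depth_le_of_opener_le le_rfl (opener_le hM hi))

/-- The elements of `{1, …, n}` whose opener is `m`: the block with minimum `m` of the noncrossing
partition of `{1, …, n}` with block minima `M` and block maxima `C`. -/
def openedBlock (M C : Finset ℕ) (n m : ℕ) : Finset ℕ :=
  {i ∈ Finset.Icc 1 n | opener M C i = m}

theorem mem_openedBlock {m i : ℕ} :
    i ∈ openedBlock M C n m ↔ i ∈ Finset.Icc 1 n ∧ opener M C i = m :=
  Finset.mem_filter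

theorem fmax_openedBlock_opener (hM : 0 ∉ M) (hdepth : ∀ i ∈ Finset.Icc 1 n, 0 < depth M C i)
    {c : ℕ} (hcn : c ∈ Finset.Icc 1 n) (hc : c ∈ C) :
    fmax (openedBlock M C n (opener M C c)) = c := by
  refine fmax_eq (mem_openedBlock.2 ⟨hcn, rfl⟩) fun j hj ↦ ?_
  obtain ⟨hjn, hopener⟩ := mem_openedBlock.1 hj
  by_contra! hcj
  have hle := opener_le hM (hdepth c hcn)
  have hdepthj : depth M C j = depth M C c := by
    rw [← depth_opener hM (hdepth j hjn), hopener, depth_opener hM (hdepth c hcn)]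
  have hjsucc : depth M C j ≤ depth M C (c + 1) := depth_le_of_opener_le (by lia) hcj
  have hsucc := depth_succ M C c
  rw [if_pos hc] at hsucc
  by_cases hmem : c + 1 ∈ M
  · rw [if_pos hmem] at hsucc
    have := le_opener hmem hcj (by lia : depth M C (c + 1) ≤ depth M C j)
    lia
  · rw [if_neg hmem] at hsucc
    lia

namespace SetPartition

variable {P Q : SetPartition n} {β γ : Finset ℕ} {i : ℕ}

theorem le_fmax_of_isNoncrossing (hP : IsNoncrossing P.blocks) (hβ : β ∈ P.blocks)
    (hγ : γ ∈ P.blocks) (hle : fmin γ ≤ fmin β) (hge : fmin β ≤ fmax γ) (hi : i ∈ β) :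
    i ≤ fmax γ := by
  rcases eq_or_ne γ β with rfl | hne
  · exact le_fmax hi
  have hminβ := P.fmin_mem hβ
  have hminγ := P.fmin_mem hγ
  have hmaxγ := P.fmax_mem hγ
  have hmin : fmin γ ≠ fmin β := fun h ↦ hne (P.injOn_fmin hγ hβ h)
  have hmax : fmin β ≠ fmax γ := fun h ↦ hne (P.eq_of_mem hγ hβ hmaxγ (h ▸ hminβ))
  by_contra! hlt
  exact hne (hP _ _ _ i (hle.lt_of_ne hmin) (hge.lt_of_ne hmax) hlt γ hγ β hβ hminγ hmaxγ hminβ hi)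

theorem fmin_le_fmin_of_isNoncrossing (hP : IsNoncrossing P.blocks) (hβ : β ∈ P.blocks)
    (hγ : γ ∈ P.blocks) (hi : i ∈ β) (hle : fmin γ ≤ i) (hge : i ≤ fmax γ) :
    fmin γ ≤ fmin β := by
  by_contra! hlt
  have hminγ := P.fmin_mem hγ
  have hmaxγ := P.fmax_mem hγ
  have hne : β ≠ γ := fun h ↦ hlt.ne (congrArg fmin h)
  have hmin : fmin γ ≠ i := fun h ↦ hne (P.eq_of_mem hβ hγ hi (h ▸ hminγ))
  have hmax : i ≠ fmax γ := fun h ↦ hne (P.eq_of_mem hβ hγ hi (h ▸ hmaxγ))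
  exact hne (hP _ _ i _ hlt (hle.lt_of_ne hmin) (hge.lt_of_ne hmax) β hβ γ hγ (P.fmin_mem hβ) hi
    hminγ hmaxγ)

theorem opener_eq_fmin (hP : IsNoncrossing P.blocks) (hβ : β ∈ P.blocks) (hi : i ∈ β) :
    opener (P.blocks.image fmin) (P.blocks.image fmax) i = fmin β := by
  refine opener_eq (Finset.mem_image_of_mem _ hβ) (fmin_le hi) ?_ fun m hm hβm hmi ↦ ?_
  · rw [depth_image, depth_image, Nat.cast_le]
    refine Finset.card_le_card (Finset.monotone_filter_right _ fun γ hγ ⟨hle, hge⟩ ↦ ?_)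
    exact ⟨hle.trans (fmin_le hi), le_fmax_of_isNoncrossing hP hβ hγ hle hge hi⟩
  · obtain ⟨γ, hγ, rfl⟩ := Finset.mem_image.1 hm
    have hopen (δ) (hδ : δ ∈ P.blocks) (h : fmin δ ≤ i ∧ i ≤ fmax δ) : fmin δ < fmin γ :=
      (fmin_le_fmin_of_isNoncrossing hP hβ hδ hi h.1 h.2).trans_lt hβm
    rw [depth_image, depth_image, Nat.cast_lt]
    refine Finset.card_lt_card ((Finset.ssubset_iff_of_subset
      (Finset.monotone_filter_right _ fun δ hδ h ↦ ?_)).2 ⟨γ, ?_, fun h ↦ ?_⟩)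
    · exact ⟨(hopen δ hδ h).le, hmi.trans h.2⟩
    · exact Finset.mem_filter.2 ⟨hγ, le_rfl, le_fmax (P.fmin_mem hγ)⟩
    · exact (hopen γ hγ (Finset.mem_filter.1 h).2).false

theorem openedBlock_fmin (hP : IsNoncrossing P.blocks) (hβ : β ∈ P.blocks) :
    openedBlock (P.blocks.image fmin) (P.blocks.image fmax) n (fmin β) = β := by
  ext i
  rw [mem_openedBlock]
  constructor
  · rintro ⟨hi, hopener⟩
    obtain ⟨γ, hγ, hiγ⟩ := (P.cover i).1 hi
    rw [opener_eq_fmin hP hγ hiγ] at hopener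
    rwa [← P.injOn_fmin hγ hβ hopener]
  · exact fun hi ↦ ⟨(P.cover i).2 ⟨β, hβ, hi⟩, opener_eq_fmin hP hβ hi⟩

theorem blocks_eq_image_openedBlock (hP : IsNoncrossing P.blocks) :
    P.blocks = (P.blocks.image fmin).image
      (openedBlock (P.blocks.image fmin) (P.blocks.image fmax) n) := by
  rw [Finset.image_image]
  exact ((Finset.image_congr fun β hβ ↦ openedBlock_fmin hP hβ).trans Finset.image_id).symm

theorem eq_of_image_fmin_eq_of_image_fmax_eq (hP : IsNoncrossing P.blocks)
    (hQ : IsNoncrossing Q.blocks) (hmin : P.blocks.image fmin = Q.blocks.image fmin)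
    (hmax : P.blocks.image fmax = Q.blocks.image fmax) : P = Q := by
  have hblocks : P.blocks = Q.blocks := by
    rw [blocks_eq_image_openedBlock hP, blocks_eq_image_openedBlock hQ, hmin, hmax]
  cases P
  cases Q
  congr

/-- The partition of `{1, …, n}` into the fibers of `opener M C`, which is the noncrossing
partition with block minima `M` and block maxima `C`. -/
def ofMinMax (hM : M ⊆ Finset.Icc 1 n) (hdepth : ∀ i ∈ Finset.Icc 1 n, 0 < depth M C i) :
    SetPartition n where
  blocks := M.image (openedBlock M C n)
  not_empty_mem := by
    rw [Finset.mem_image]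
    rintro ⟨m, hm, hempty⟩
    exact Finset.notMem_empty m (hempty ▸ mem_openedBlock.2 ⟨hM hm, opener_of_mem hm⟩)
  cover i := by
    simp only [Finset.exists_mem_image, mem_openedBlock]
    exact ⟨fun hi ↦ ⟨_, opener_mem (zero_notMem_of_subset_Icc_one hM) (hdepth i hi), hi, rfl⟩,
      fun ⟨_, _, hi, _⟩ ↦ hi⟩
  disjoint := by
    simp only [Finset.forall_mem_image]
    intro m _ m' _ hne
    refine Finset.disjoint_left.2 fun i hi hi' ↦ hne ?_
    rw [← (mem_openedBlock.1 hi).2, (mem_openedBlock.1 hi').2]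

variable (hM : M ⊆ Finset.Icc 1 n) (hdepth : ∀ i ∈ Finset.Icc 1 n, 0 < depth M C i)

theorem isNoncrossing_ofMinMax : IsNoncrossing (ofMinMax hM hdepth).blocks := by
  have hM0 := zero_notMem_of_subset_Icc_one hM
  simp only [IsNoncrossing, ofMinMax, Finset.forall_mem_image, mem_openedBlock]
  rintro a b c d hab hbc hcd m hm m' hm' ⟨ha, ham⟩ ⟨hc, hcm⟩ ⟨hb, hbm⟩ ⟨hd, hdm⟩
  have hma : m ≤ a := ham ▸ opener_le hM0 (hdepth a ha)
  have hmb : m' ≤ b := hbm ▸ opener_le hM0 (hdepth b hb)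
  have hcb : depth M C c ≤ depth M C b := depth_le_of_opener_le (by lia) hbc.le
  have hdc : depth M C d ≤ depth M C c := depth_le_of_opener_le (by lia) hcd.le
  have hdepthm : depth M C m = depth M C c := hcm ▸ depth_opener hM0 (hdepth c hc)
  have hdepthm' : depth M C m' = depth M C d := hdm ▸ depth_opener hM0 (hdepth d hd)
  have hle : m ≤ m' := hbm ▸ le_opener hm (by lia) (hdepthm.trans_le hcb)
  have hge : m' ≤ m := hcm ▸ le_opener hm' (by lia) (hdepthm'.trans_le hdc)
  rw [le_antisymm hle hge]

theorem image_fmin_ofMinMax : (ofMinMax hM hdepth).blocks.image fmin = M := by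
  have hM0 := zero_notMem_of_subset_Icc_one hM
  rw [ofMinMax, Finset.image_image]
  refine (Finset.image_congr fun m hm ↦ ?_).trans Finset.image_id
  refine fmin_eq (mem_openedBlock.2 ⟨hM hm, opener_of_mem hm⟩) fun i hi ↦ ?_
  obtain ⟨hin, hopener⟩ := mem_openedBlock.1 hi
  exact hopener ▸ opener_le hM0 (hdepth i hin)

theorem image_fmax_ofMinMax (hC : C ⊆ Finset.Icc 1 n) (hcard : #M = #C) :
    (ofMinMax hM hdepth).blocks.image fmax = C := by
  have hM0 := zero_notMem_of_subset_Icc_one hM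
  refine (Finset.eq_of_subset_of_card_le (fun c hc ↦ Finset.mem_image.2 ?_) ?_).symm
  · exact ⟨_, Finset.mem_image_of_mem _ (opener_mem hM0 (hdepth c (hC hc))),
      fmax_openedBlock_opener hM0 hdepth (hC hc) hc⟩
  · calc #((ofMinMax hM hdepth).blocks.image fmax) ≤ #(ofMinMax hM hdepth).blocks :=
          Finset.card_image_le
      _ = #((ofMinMax hM hdepth).blocks.image fmin) :=
          (Finset.card_image_of_injOn (injOn_fmin _)).symm
      _ = #C := by rw [image_fmin_ofMinMax, hcard]

end SetPartition

end Noncrossing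

/-! ### Counting noncrossing partitions -/

theorem Leads.exists_eq_append_singleton {c : Step} {a : ℕ} {u l : List Step}
    (h : Leads c (a + 1) u l) : ∃ w, u = w ++ [c] ∧ w.length = a + l.length := by
  have hlength : u.length = a + 1 + l.length := by
    rw [← count_add_count_swap c u, ← count_add_count_swap c l, h.count_eq, h.count_swap_eq,
      Nat.add_assoc]
  obtain ⟨w, x, rfl⟩ := (List.eq_nil_or_concat' u).resolve_left
    (List.ne_nil_of_length_pos (by lia))
  rw [List.length_append, List.length_singleton] at hlength
  refine ⟨w, ?_, by lia⟩
  by_contra hx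
  have hxc : x ≠ c := fun hxc ↦ hx (hxc ▸ rfl)
  have hcount := h.count_eq
  simp only [List.count_append, List.count_singleton, beq_iff_eq, hxc, if_false, Nat.add_zero]
    at hcount
  rcases l.eq_nil_or_concat' with rfl | ⟨l, y, rfl⟩
  · have := w.count_le_length (a := c)
    simp only [List.count_nil, List.length_nil] at hcount hlength
    lia
  · rw [List.length_append, List.length_singleton] at hlength
    have htake := h.count_take_lt l.length (by simp)
    rw [List.take_append_of_le_length (by lia), List.take_of_length_le (by lia), List.take_left]
      at htake
    rw [List.count_append] at hcount
    lia

theorem Leads.exists_isNoncrossing {u l : List Step} (h : Leads Step.E 1 u l) :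
    ∃ P : SetPartition l.length, IsNoncrossing P.blocks ∧
      stepWord (P.blocks.image fmin) l.length ++ [Step.E] = u ∧
      stepWord (P.blocks.image fmax) l.length = l := by
  obtain ⟨w, rfl, hw⟩ := h.exists_eq_append_singleton
  rw [Nat.zero_add] at hw
  obtain ⟨M, hM, rfl⟩ := exists_stepWord_eq hw
  obtain ⟨C, hC, hl⟩ := exists_stepWord_eq (w := l) rfl
  rw [← hl, length_stepWord, leads_stepWord_iff hM hC] at h
  refine ⟨SetPartition.ofMinMax hM h.2, SetPartition.isNoncrossing_ofMinMax hM h.2, ?_, ?_⟩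
  · rw [SetPartition.image_fmin_ofMinMax]
  · rw [SetPartition.image_fmax_ofMinMax hM h.2 hC h.1, hl]

namespace NC

variable {n k : ℕ}

theorem bijOn_leadPairs (hk : 0 < k) (hkn : k ≤ n) :
    Set.BijOn (fun π : NC n k ↦ (stepWord (π.1.blocks.image fmin) n ++ [Step.E],
      stepWord (π.1.blocks.image fmax) n)) Set.univ (leadPairs Step.E 1 (k - 1) (n - k + 1)) := by
  refine ⟨fun ⟨P, _, hP⟩ _ ↦ ?_, fun ⟨P, hP, _⟩ _ ⟨Q, hQ, _⟩ _ h ↦ ?_, fun ⟨u, l⟩ h ↦ ?_⟩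
  · have hN := count_N_stepWord_of_subset P.image_fmax_subset_Icc
    have hlength := count_add_count_swap Step.E (stepWord (P.blocks.image fmax) n)
    rw [Finset.card_image_of_injOn P.injOn_fmax, hP] at hN
    rw [length_stepWord, Step.swap_E, hN] at hlength
    exact mem_leadPairs.2 ⟨P.leads_stepWord, by lia, hN⟩
  · obtain ⟨hmin, hmax⟩ := Prod.mk.inj h
    exact Subtype.ext (SetPartition.eq_of_image_fmin_eq_of_image_fmax_eq hP hQ
      (stepWord_injOn n P.image_fmin_subset_Icc Q.image_fmin_subset_Icc
        (List.append_cancel_right hmin))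
      (stepWord_injOn n P.image_fmax_subset_Icc Q.image_fmax_subset_Icc hmax))
  · obtain ⟨hleads, hE, hN⟩ := mem_leadPairs.1 h
    obtain rfl : l.length = n := by
      rw [← count_add_count_swap Step.E, hE, hN]
      lia
    obtain ⟨P, hP, hmin, hmax⟩ := hleads.exists_isNoncrossing
    rw [Step.swap_E, ← hmax, count_N_stepWord_of_subset P.image_fmax_subset_Icc,
      Finset.card_image_of_injOn P.injOn_fmax] at hN
    exact ⟨⟨P, hP, hN⟩, trivial, Prod.ext hmin hmax⟩

theorem card_skip_mingarc (hk : 0 < k) (hkn : k ≤ n) (u v : ℕ) :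
    Nat.card {π : NC n k // skip π.1.blocks = u ∧ mingarc n π.1.blocks = v} =
      leadCount (k - 1) (n - k + 1) u v :=
  card_eq_leadCount (bijOn_leadPairs hk hkn) _ _ (fun π ↦ π.1.areaExcess_stepWord)
    (fun π ↦ π.1.bounceSum_stepWord (hk.trans_le hkn)) u v

end NC

/-- The pair (skip, mingarc) is a combinatorial interpretation of `N_{n,k}(q,t)` for
all `n ≥ k ≥ 1`: the number of `π ∈ NC(n,k)` with `skip π = u` and `mingarc π = v`
equals the number of `P ∈ PP(n-k+1,k)` with `area P = u` and `bounce P = v`. -/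
theorem skip_mingarc_pair (n k : ℕ) (hk : 1 ≤ k) (hkn : k ≤ n) (u v : ℕ) :
    Nat.card {π : NC n k // skip π.val.blocks = u ∧ mingarc n π.val.blocks = v} =
    Nat.card {P : Polyomino (n - k + 1) k // area P = u ∧ bounce P = v} := by
  obtain ⟨k, rfl⟩ := Nat.exists_eq_add_of_le' hk
  rw [NC.card_skip_mingarc hk hkn, card_polyomino hk, ← leadCount_succ_comm, Nat.add_sub_cancel]

end QtN
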